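/- arXiv:1202.4406 — 7 statements merged into one kernel-verified Lean document; each statement's English description precedes it below -/
import Mathlib

section
/- A finite simple graph G is a proper interval graph if and only if its closed neighborhood hypergraph N[G] is an interval hypergraph. -/
/-!
In a proper interval model the left and the right endpoints sort the vertices in the same way.
In that order `y` between `x` and `z` starts before `z` does and ends after `x` does, so it meets
every interval met by both `x` and `z`: closed neighborhoods are intervals of the order.

Conversely, let every closed neighborhood be an interval of a linear order, let `p v` be the rank
of `v`, and let `w v` be the last element of `N[v]`. Symmetry of adjacency makes `p (w v)` weakly
increasing in `v`, and for `u` before `v`, adjacency means exactly `p v ≤ p (w u)`. The intervals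
`[M * p v, M * p (w v) + p v]`, with `M` larger than all ranks, therefore represent `G`: the scaling
leaves room for the summand `p v`, which makes the right endpoints strictly increasing and the
intervals pairwise incomparable.
-/

open Set

/-- The closed neighborhood of a vertex: the vertex together with its neighbors. -/
def ClosedNbhd {V : Type*} (G : SimpleGraph V) (v : V) : Set V :=
  {u | u = v ∨ G.Adj u v}

/-- `S` is an interval (order-convex set) with respect to the order relation `r`. -/
def IsIntervalWrt {α : Type*} (r : α → α → Prop) (S : Set α) : Prop :=
  ∀ x y z, r x y → r y z → x ∈ S → z ∈ S → y ∈ S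

/-- A family of hyperedges forms an interval hypergraph: some linear order on the
vertices makes every hyperedge an interval (a set of consecutive elements). -/
def IsIntervalHypergraph {α ι : Type*} (H : ι → Set α) : Prop :=
  ∃ r : α → α → Prop, IsLinearOrder α r ∧ ∀ i, IsIntervalWrt r (H i)

/-- `S ⊆ ZMod n` is an arc: a set of (at most `n`) circularly consecutive points. -/
def IsArc (n : ℕ) (S : Set (ZMod n)) : Prop :=
  ∃ a : ZMod n, ∃ k : ℕ, k ≤ n ∧ S = {x | ∃ i : ℕ, i < k ∧ x = a + (i : ZMod n)}

/-- Arcs `A` and `B` share their start point: some point is a start point of both. -/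
def SharesStart (n : ℕ) (A B : Set (ZMod n)) : Prop :=
  ∃ a, a ∈ A ∧ a - 1 ∉ A ∧ a ∈ B ∧ a - 1 ∉ B

/-- Arcs `A` and `B` share their end point: some point is an end point of both. -/
def SharesEnd (n : ℕ) (A B : Set (ZMod n)) : Prop :=
  ∃ a, a ∈ A ∧ a + 1 ∉ A ∧ a ∈ B ∧ a + 1 ∉ B

/-- `G` is a proper interval graph: it has an intersection model consisting of
nonempty integer intervals that are pairwise incomparable under inclusion. -/
def IsProperIntervalGraph {V : Type*} (G : SimpleGraph V) : Prop :=
  ∃ l : V → Set ℤ,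
    (∀ v, ∃ a b : ℤ, a ≤ b ∧ l v = Set.Icc a b) ∧
    (∀ u v, u ≠ v → ¬ l u ⊆ l v) ∧
    (∀ u v, u ≠ v → (G.Adj u v ↔ (l u ∩ l v).Nonempty))

/-- `G` is a circular-arc graph: it has an intersection model consisting of
nonempty arcs of some circle `ZMod n`. -/
def IsCAGraph {V : Type*} (G : SimpleGraph V) : Prop :=
  ∃ n : ℕ, 0 < n ∧ ∃ l : V → Set (ZMod n),
    Function.Injective l ∧
    (∀ v, (l v).Nonempty ∧ IsArc n (l v)) ∧
    (∀ u v, u ≠ v → (G.Adj u v ↔ (l u ∩ l v).Nonempty))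

/-- `G` is a proper circular-arc graph: it has an intersection model consisting of
nonempty arcs of some circle `ZMod n`, pairwise incomparable under inclusion. -/
def IsPCAGraph {V : Type*} (G : SimpleGraph V) : Prop :=
  ∃ n : ℕ, 0 < n ∧ ∃ l : V → Set (ZMod n),
    Function.Injective l ∧
    (∀ v, (l v).Nonempty ∧ IsArc n (l v)) ∧
    (∀ u v, u ≠ v → ¬ l u ⊆ l v) ∧
    (∀ u v, u ≠ v → (G.Adj u v ↔ (l u ∩ l v).Nonempty))

/-- `G` is bipartite: the vertex set splits into two independent sets. -/
def IsBipartite {V : Type*} (G : SimpleGraph V) : Prop :=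
  ∃ U : Set V, (∀ u ∈ U, ∀ v ∈ U, ¬ G.Adj u v) ∧ (∀ u ∉ U, ∀ v ∉ U, ¬ G.Adj u v)

/-- A linear order on a finite type is the order of the ranks `p v = #{x | r x v}`. -/
lemma exists_rank {V : Type*} [Fintype V] (r : V → V → Prop) (hr : IsLinearOrder V r) :
    ∃ (p : V → ℤ) (M : ℤ), (∀ v, 0 ≤ p v ∧ p v < M) ∧ (∀ u v, r u v ↔ p u ≤ p v) ∧
      Function.Injective p := by
  classical
  have key : ∀ u v, r u v ↔
      (Finset.univ.filter (fun x => r x u)).card ≤ (Finset.univ.filter (fun x => r x v)).card := by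
    intro u v
    constructor
    · intro h
      apply Finset.card_le_card
      intro x hx
      simp only [Finset.mem_filter, Finset.mem_univ, true_and] at hx ⊢
      exact hr.trans _ _ _ hx h
    · intro h
      by_contra hn
      have hvu : r v u := (hr.total u v).resolve_left hn
      refine absurd h (not_le.mpr (Finset.card_lt_card ?_))
      rw [Finset.ssubset_iff_of_subset]
      · exact ⟨u, by simpa using hr.refl u, by simpa using hn⟩
      · intro x hx
        simp only [Finset.mem_filter, Finset.mem_univ, true_and] at hx ⊢
        exact hr.trans _ _ _ hx hvu
  refine ⟨fun v => ((Finset.univ.filter (fun x => r x v)).card : ℤ), Fintype.card V + 1,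
    fun v => ⟨Int.natCast_nonneg _, ?_⟩, fun u v => ?_, fun u v h => ?_⟩
  · have := Finset.card_le_univ (Finset.univ.filter (fun x => r x v))
    show ((Finset.univ.filter (fun x => r x v)).card : ℤ) < _
    omega
  · rw [key]
    exact Nat.cast_le.symm
  · have h' : (Finset.univ.filter (fun x => r x u)).card
        = (Finset.univ.filter (fun x => r x v)).card := Nat.cast_injective (R := ℤ) h
    exact hr.antisymm _ _ ((key u v).2 h'.le) ((key v u).2 h'.ge)

lemma isIntervalHypergraph_of_proper {V : Type*} (G : SimpleGraph V)
    (h : IsProperIntervalGraph G) : IsIntervalHypergraph (fun v => ClosedNbhd G v) := by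
  obtain ⟨l, hl, hinc, hadj⟩ := h
  choose a b hab hl using hl
  have hmono : ∀ u v, a u ≤ a v → b u ≤ b v := by
    intro u v h
    by_contra hb
    have hne : v ≠ u := by rintro rfl; exact hb le_rfl
    apply hinc v u hne
    rw [hl, hl]
    exact Icc_subset_Icc h (not_le.mp hb).le
  have hinj : ∀ u v, a u = a v → u = v := by
    intro u v h
    by_contra hne
    apply hinc u v hne
    rw [hl, hl]
    exact Icc_subset_Icc h.ge (hmono u v h.le)
  have hmeet : ∀ u v, u ∈ ClosedNbhd G v ↔ a u ≤ b v ∧ a v ≤ b u := by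
    intro u v
    by_cases huv : u = v
    · subst huv
      simp [ClosedNbhd, hab]
    · simp only [ClosedNbhd, mem_ofPred_eq, huv, false_or]
      rw [hadj u v huv, hl, hl, Icc_inter_Icc, nonempty_Icc]
      have := hab u
      have := hab v
      simp only [sup_le_iff, le_inf_iff]
      tauto
  refine ⟨fun u v => a u ≤ a v, ?_, ?_⟩
  · exact { refl := fun _ => le_rfl
            trans := fun _ _ _ => le_trans
            antisymm := fun u v h h' => hinj u v (le_antisymm h h')
            total := fun _ _ => le_total _ _ }
  · intro v x y z hxy hyz hx hz
    rw [hmeet] at hx hz ⊢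
    exact ⟨hyz.trans hz.1, hx.2.trans (hmono x y hxy)⟩

lemma proper_of_isIntervalHypergraph {V : Type*} [Fintype V] (G : SimpleGraph V)
    (h : IsIntervalHypergraph (fun v => ClosedNbhd G v)) : IsProperIntervalGraph G := by
  classical
  obtain ⟨r, hr, hint⟩ := h
  obtain ⟨p, M, hp, hrp, hinj⟩ := exists_rank r hr
  have hconv : ∀ v x y z, p x ≤ p y → p y ≤ p z → x ∈ ClosedNbhd G v → z ∈ ClosedNbhd G v →
      y ∈ ClosedNbhd G v := fun v x y z hxy hyz =>
    hint v x y z ((hrp _ _).2 hxy) ((hrp _ _).2 hyz)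
  have hself : ∀ v, v ∈ ClosedNbhd G v := fun v => Or.inl rfl
  have hsymm : ∀ u v, u ∈ ClosedNbhd G v → v ∈ ClosedNbhd G u := fun u v h =>
    h.imp Eq.symm SimpleGraph.Adj.symm
  have hmax : ∀ v, ∃ w ∈ ClosedNbhd G v, ∀ x ∈ ClosedNbhd G v, p x ≤ p w := fun v =>
    Set.exists_max_image _ p (Set.toFinite _) ⟨v, hself v⟩
  choose w hw hwmax using hmax
  have hle : ∀ v, p v ≤ p (w v) := fun v => hwmax v v (hself v)
  have hmono : ∀ u v, p u ≤ p v → p (w u) ≤ p (w v) := by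
    intro u v huv
    rcases le_total (p (w u)) (p v) with h | h
    · exact h.trans (hle v)
    -- `u` and `w u` lie in `N[w u]`, hence so does `v` between them.
    · exact hwmax v _ (hsymm _ _ (hconv (w u) u v (w u) huv h (hsymm _ _ (hw u)) (hself _)))
  have hadj : ∀ u v, p u < p v → (G.Adj u v ↔ p v ≤ p (w u)) := by
    intro u v huv
    constructor
    · intro h
      exact hwmax u v (Or.inr h.symm)
    · intro h
      rcases hconv u u v (w u) huv.le h (hself u) (hw u) with h | h
      · exact absurd huv (by simp [h])
      · exact h.symm
  have hscale : ∀ x y c : ℤ, 0 ≤ c → c < M → (M * x ≤ M * y + c ↔ x ≤ y) := by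
    intro x y c h0 hM
    constructor
    · intro h
      by_contra! hlt
      nlinarith
    · intro h
      nlinarith
  have hmeet : ∀ u v, p u < p v → (G.Adj u v ↔
      (Icc (M * p u) (M * p (w u) + p u) ∩ Icc (M * p v) (M * p (w v) + p v)).Nonempty) := by
    intro u v huv
    have hu := (hscale _ _ _ (hp u).1 (hp u).2).2 (hle u)
    have hv := (hscale _ _ _ (hp v).1 (hp v).2).2 (hle v)
    have huv' := (hscale _ _ _ (hp v).1 (hp v).2).2 (huv.le.trans (hle v))
    rw [hadj u v huv, Icc_inter_Icc, nonempty_Icc, ← hscale _ _ _ (hp u).1 (hp u).2]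
    simp only [sup_le_iff, le_inf_iff]
    tauto
  refine ⟨fun v => Icc (M * p v) (M * p (w v) + p v), fun v => ⟨_, _, ?_, rfl⟩, ?_, ?_⟩
  · exact (hscale _ _ _ (hp v).1 (hp v).2).2 (hle v)
  · intro u v huv hsub
    obtain ⟨h1, h2⟩ := (Icc_subset_Icc_iff ((hscale _ _ _ (hp u).1 (hp u).2).2 (hle u))).1 hsub
    have hM : 0 < M := (hp u).1.trans_lt (hp u).2
    have hvu : p v ≤ p u := le_of_mul_le_mul_left h1 hM
    have hne : p v ≠ p u := fun h => huv (hinj h).symm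
    have := mul_le_mul_of_nonneg_left (hmono v u hvu) hM.le
    omega
  · intro u v huv
    rcases lt_or_gt_of_ne (fun h => huv (hinj h) : p u ≠ p v) with h | h
    · exact hmeet u v h
    · rw [G.adj_comm, inter_comm]
      exact hmeet v u h

/-- Roberts. A finite simple graph `G` is a proper interval graph
iff its closed neighborhood hypergraph `N[G]` is an interval hypergraph. -/
theorem stmt0 {V : Type*} [Fintype V] (G : SimpleGraph V) :
    IsProperIntervalGraph G ↔ IsIntervalHypergraph (fun v => ClosedNbhd G v) :=
  ⟨isIntervalHypergraph_of_proper G, proper_of_isIntervalHypergraph G⟩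
end

section
/- A finite simple graph G is a proper circular-arc (PCA) graph if and only if its closed neighborhood hypergraph N[G] admits a tight arc ordering (i.e., N[G] is a tight circular-arc hypergraph). -/
/-!
**A proper model gives a tight ordering.** Order the vertices by the start points of their arcs.
Then `N[v]` is the union of `L v` (the arcs containing the start of `v`) and `R v` (the arcs
starting inside the arc of `v`). Because the arcs are pairwise incomparable, `L v` is a run of
consecutive vertices ending at `v` and `R v` one beginning at `v`, so `N[v]` is an arc. Both are
cliques: the arcs of `L v` share the start of `v`, those of `R v` its last point. If
`N[j] ⊆ N[v]` and `N[v]` is not everything, then `j` lies in `L v` or in `R v`; in the first case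
`N[j]` contains `L v` and hence the start point of `N[v]`, in the second case its end point
(`tightOrdering_of_pca`).

**A tight ordering gives a proper model.** An arc ordering of `N[G]` is encoded as a `RoundRel`:
no two points of a neighborhood separate two points outside it. Two non-universal vertices are in
`Conflict` if each lies to the right of the other.

If there is no conflict in either orientation of the circle, let the arc of `v` start at `v` and
go on until some vertex `u` met on the way would reach a non-neighbor `y` of `u`. The end points are
weakly monotone by construction and can be made distinct; adjacent vertices still meet, since
otherwise two of the vertices involved would be in conflict (`RoundRel.crossing`,
`RoundRel.pca_of_noConflict`).

If there is a conflict, the vertices split into two cliques (`RoundRel.cobipartite`). Cutting the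
circle at a vertex of the first clique, the non-neighbors of a vertex `x` of that clique form an
interval `[l x, r x]` of the second one. Tightness forbids such an interval to lie strictly inside
another at both ends, so the first clique can be ordered by both `l` and `r` simultaneously, and a
proper model is written down explicitly (`pca_of_twoCliques`). In both cases the model is
described by lifted arcs of integers (`pca_of_lift`).
-/

open Set

/-- An arc ordering of the family `H` on `ZMod n`: a bijection under which the image
of every hyperedge is an arc. -/
def IsArcOrderingFam {V ι : Type*} (H : ι → Set V) (n : ℕ) (f : V ≃ ZMod n) : Prop :=
  ∀ i, IsArc n (f '' H i)

/-- A tight arc ordering of the family `H`: whenever one hyperedge contains another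
nonempty one, and the image of the larger one is not the whole circle, the two image
arcs share their start point or their end point. -/
def IsTightArcOrderingFam {V ι : Type*} (H : ι → Set V) (n : ℕ) (f : V ≃ ZMod n) : Prop :=
  IsArcOrderingFam H n f ∧
  ∀ i j, H j ⊆ H i → (H j).Nonempty → f '' H i ≠ Set.univ →
    SharesStart n (f '' H i) (f '' H j) ∨ SharesEnd n (f '' H i) (f '' H j)

/-! ### Arcs in coordinates and lifted models -/

/-- `b` is met strictly between `a` and `c` when the circle of naturals is traversed upwards
from `a` to `c`. -/
def Cyc (a b c : ℕ) : Prop := (a < b ∧ b < c) ∨ (b < c ∧ c < a) ∨ (c < a ∧ a < b)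

/-- The number of upward steps from `a` to `b` on the circle `{0, …, n - 1}`. -/
def gap (n a b : ℕ) : ℕ := if a ≤ b then b - a else b + n - a

theorem val_sub_gap {n : ℕ} [NeZero n] (x y : ZMod n) : (y - x).val = gap n x.val y.val := by
  have hx := x.val_lt
  have hy := y.val_lt
  have h : (y - x) = ((gap n x.val y.val : ℕ) : ZMod n) := by
    unfold gap
    split_ifs with h
    · rw [Nat.cast_sub h]; simp
    · rw [Nat.cast_sub (by omega)]; simp
  rw [h, ZMod.val_natCast_of_lt]
  unfold gap; split_ifs <;> omega

theorem isArc_iff {n : ℕ} [NeZero n] (S : Set (ZMod n)) :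
    IsArc n S ↔ ∃ a : ZMod n, ∃ k : ℕ, k ≤ n ∧ ∀ x, x ∈ S ↔ gap n a.val x.val < k := by
  unfold IsArc
  refine exists_congr fun a => exists_congr fun k => and_congr_right fun hk => ?_
  rw [Set.ext_iff]
  refine forall_congr' fun x => iff_congr Iff.rfl ?_
  rw [← val_sub_gap]
  constructor
  · rintro ⟨i, hi, rfl⟩
    rw [add_sub_cancel_left, ZMod.val_natCast_of_lt (by omega)]
    exact hi
  · intro h
    exact ⟨_, h, by simp⟩

/-- An arc is not crossed: two of its points cannot separate two points of the complement. -/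
theorem IsArc.noncrossing {n : ℕ} [NeZero n] {S : Set (ZMod n)} (h : IsArc n S)
    (a b c d : ZMod n) (h1 : Cyc a.val b.val c.val) (h2 : Cyc c.val d.val a.val)
    (ha : a ∈ S) (hc : c ∈ S) : b ∈ S ∨ d ∈ S := by
  obtain ⟨s, k, hk, hS⟩ := (isArc_iff S).1 h
  rw [hS] at ha hc ⊢
  rw [hS]
  have := a.val_lt; have := b.val_lt; have := c.val_lt; have := d.val_lt; have := s.val_lt
  clear hS
  by_contra hcon
  unfold Cyc gap at *
  split_ifs at * <;> omega

/-- A proper circular-arc model given by lifted arcs `[s v, e v]` (to be read modulo `N`) whose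
end points come in the same strict circular order as their start points. -/
theorem pca_of_lift {V : Type*} (G : SimpleGraph V) (N : ℕ) (hN : 0 < N) (s e : V → ℕ)
    (hs : ∀ v, s v < N) (hse : ∀ v, s v ≤ e v) (he : ∀ v, e v + 1 < s v + N)
    (hinj : Function.Injective s)
    (hmono : ∀ u v, s u < s v → e u < e v ∧ e v < e u + N)
    (hadj : ∀ u v, s u < s v → (G.Adj u v ↔ s v ≤ e u ∨ s u + N ≤ e v)) : IsPCAGraph G := by
  have : NeZero N := ⟨hN.ne'⟩
  let l : V → Set (ZMod N) := fun v => {x | gap N (s v) x.val < e v - s v + 1}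
  have hmem : ∀ v t, t < N → ((t : ZMod N) ∈ l v ↔ gap N (s v) t < e v - s v + 1) := by
    intro v t ht
    simp only [l, Set.mem_ofPred_eq, ZMod.val_natCast_of_lt ht]
  have hinc : ∀ u v, u ≠ v → ¬ l u ⊆ l v := by
    intro u v huv hsub
    have hne : s u ≠ s v := fun h => huv (hinj h)
    have key : ∀ t, t < N → gap N (s u) t < e u - s u + 1 → gap N (s v) t < e v - s v + 1 :=
      fun t ht h => (hmem v t ht).1 (hsub ((hmem u t ht).2 h))
    have h1 := key (s u) (hs u)
    -- the point following the last one of `l v`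
    have h2 := key (if N ≤ e v + 1 then e v + 1 - N else e v + 1)
    have := hs u; have := hs v; have := hse u; have := hse v; have := he u; have := he v
    have m1 := hmono u v
    have m2 := hmono v u
    unfold gap at *
    split_ifs at * <;> omega
  refine ⟨N, hN, l, ?_, ?_, hinc, ?_⟩
  · intro u v h
    by_contra hne
    exact hinc u v hne h.le
  · intro v
    refine ⟨⟨(s v : ZMod N), (hmem v _ (hs v)).2 (by unfold gap; simp)⟩, ?_⟩
    rw [isArc_iff]
    have := he v; have := hse v
    exact ⟨(s v : ZMod N), e v - s v + 1, by omega, fun x => by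
      rw [ZMod.val_natCast_of_lt (hs v)]; rfl⟩
  · have key : ∀ u v, s u < s v → (G.Adj u v ↔ (l u ∩ l v).Nonempty) := by
      intro u v h
      rw [hadj u v h]
      have := hs u; have := hs v; have := hse u; have := hse v; have := he u; have := he v
      have m1 := hmono u v
      constructor
      · rintro (h' | h')
        · refine ⟨(s v : ZMod N), (hmem u _ (hs v)).2 ?_, (hmem v _ (hs v)).2 ?_⟩ <;>
          · unfold gap; split_ifs <;> omega
        · refine ⟨(s u : ZMod N), (hmem u _ (hs u)).2 ?_, (hmem v _ (hs u)).2 ?_⟩ <;>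
          · unfold gap; split_ifs <;> omega
      · rintro ⟨x, hx1, hx2⟩
        have := x.val_lt
        simp only [l, Set.mem_ofPred_eq] at hx1 hx2
        unfold gap at *
        split_ifs at * <;> omega
    intro u v huv
    have hne : s u ≠ s v := fun h => huv (hinj h)
    rcases lt_or_gt_of_ne hne with h | h
    · exact key u v h
    · rw [G.adj_comm, key v u h, Set.inter_comm]

/-! ### Orderings without conflicting pairs -/

/-- A reflexive symmetric relation `A` (closed adjacency) on vertices placed at the positions
`p v < n` of a circle, such that the neighborhoods `{y | A x y}` are not crossed. This captures
an arc ordering of the closed neighborhoods in a form that is stable under rotation and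
reflection. -/
structure RoundRel {V : Type*} (A : V → V → Prop) (n : ℕ) (p : V → ℕ) : Prop where
  refl : ∀ x, A x x
  symm : ∀ x y, A x y → A y x
  inj : Function.Injective p
  lt : ∀ x, p x < n
  nc : ∀ z a b c d, Cyc (p a) (p b) (p c) → Cyc (p c) (p d) (p a) → A z a → A z c →
    A z b ∨ A z d

/-- Two non-universal vertices `u`, `v` conflict if `N[u]` contains the arc from `u` up to `v`
and `N[v]` contains the arc from `v` up to `u`: each lies to the right of the other. -/
def Conflict {V : Type*} (A : V → V → Prop) (p : V → ℕ) (u v : V) : Prop :=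
  u ≠ v ∧ A u v ∧ (∃ b, ¬ A u b) ∧ (∃ c, ¬ A v c) ∧
    (∀ z, Cyc (p u) (p z) (p v) → A u z) ∧ (∀ z, Cyc (p v) (p z) (p u) → A v z)

theorem gap_order {n v u x w : ℕ} (hv : v < n) (hu : u < n) (hx : x < n) (hw : w < n)
    (hux : u ≠ x) (hvw : v ≠ w) (h : gap n v u + gap n u x ≤ gap n v w) :
    (u = v ∧ x = w) ∨ (u = v ∧ Cyc v x w) ∨ (Cyc v u w ∧ x = w) ∨ (Cyc v u x ∧ Cyc v x w) := by
  by_cases e : u = v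
  · by_cases e' : x = w
    · exact Or.inl ⟨e, e'⟩
    · refine Or.inr (Or.inl ⟨e, ?_⟩)
      unfold Cyc; unfold gap at h; split_ifs at h <;> omega
  · refine Or.inr (Or.inr ?_)
    by_cases e' : x = w
    · refine Or.inl ⟨?_, e'⟩
      unfold Cyc; unfold gap at h; split_ifs at h <;> omega
    · refine Or.inr ⟨?_, ?_⟩ <;>
      · unfold Cyc; unfold gap at h; split_ifs at h <;> omega

namespace RoundRel

variable {V : Type*} {A : V → V → Prop} {n : ℕ} {p : V → ℕ}

theorem ne_pos (h : RoundRel A n p) {x y : V} (hxy : ¬ A x y) : p x ≠ p y := by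
  intro he
  have := h.inj he
  subst this
  exact hxy (h.refl _)

theorem side (h : RoundRel A n p) (z a b : V) (ha : A z a) (hb : A z b) :
    (∀ t, Cyc (p a) (p t) (p b) → A z t) ∨ (∀ t, Cyc (p b) (p t) (p a) → A z t) := by
  by_contra hcon
  push Not at hcon
  obtain ⟨⟨t, ht, ht'⟩, ⟨t2, hs, hs'⟩⟩ := hcon
  rcases h.nc z a t b t2 ht hs ha hb with h1 | h1
  · exact ht' h1
  · exact hs' h1

/-- If the arc from `v` up to `w` lies in both `N[v]` and `N[w]`, then non-adjacent pairs
`u, x` on it and `u', x'` on the complementary arc make `x` and `x'` conflict. -/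
theorem crossing_aux (h : RoundRel A n p) (hno : ∀ u v, ¬ Conflict A p u v)
    {v w u x u' x' : V} (hvw : v ≠ w) (hAvw : A v w)
    (hux : ¬ A u x) (hux' : ¬ A u' x')
    (h1 : gap n (p v) (p u) + gap n (p u) (p x) ≤ gap n (p v) (p w))
    (h2 : gap n (p w) (p u') + gap n (p u') (p x') ≤ gap n (p w) (p v))
    (hv : ∀ t, Cyc (p v) (p t) (p w) → A v t) (hw : ∀ t, Cyc (p v) (p t) (p w) → A w t) :
    False := by
  have n1 := h.ne_pos hux
  have n2 := h.ne_pos hux'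
  have n3 : p v ≠ p w := fun e => hvw (h.inj e)
  have b1 := h.lt v; have b2 := h.lt w; have b3 := h.lt u; have b4 := h.lt x
  have b5 := h.lt u'; have b6 := h.lt x'
  have c1 := gap_order b1 b3 b4 b2 n1 n3 h1
  have c2 := gap_order b2 b5 b6 b1 n2 n3.symm h2
  clear h1 h2
  -- neither `u = v` nor `x = w`, since these vertices are adjacent to the whole arc
  obtain ⟨cux, cx⟩ : Cyc (p v) (p u) (p x) ∧ Cyc (p v) (p x) (p w) := by
    rcases c1 with ⟨e, e'⟩ | ⟨e, k⟩ | ⟨k, e⟩ | k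
    · rw [h.inj e, h.inj e'] at hux; exact absurd hAvw hux
    · rw [h.inj e] at hux; exact absurd (hv x k) hux
    · rw [h.inj e] at hux; exact absurd (h.symm _ _ (hw u k)) hux
    · exact k
  have cu : Cyc (p v) (p u) (p w) := by
    clear c2 n1 n2; unfold Cyc at *; omega
  have cx' : p x' = p v ∨ Cyc (p w) (p x') (p v) := by
    clear cu cux cx c1; tauto
  have hxv' : ∀ t, Cyc (p w) (p t) (p v) → A x t := by
    rcases h.side x v w (h.symm _ _ (hv x cx)) (h.symm _ _ (hw x cx)) with k | k
    · exact absurd (h.symm _ _ (k u cu)) hux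
    · exact k
  have hx' : A x x' := by
    rcases cx' with e | e
    · rw [h.inj e]; exact h.symm _ _ (hv x cx)
    · exact hxv' _ e
  refine hno x x' ⟨?_, hx', ⟨u, fun k => hux (h.symm _ _ k)⟩, ⟨u', fun k => hux' (h.symm _ _ k)⟩,
    ?_, ?_⟩
  · rintro rfl
    clear hxv' hv hw cu cux c1 c2
    unfold Cyc at *; omega
  · rcases h.side x x x' (h.refl x) hx' with k | k
    · exact k
    · refine absurd (h.symm _ _ (k u ?_)) hux
      clear hxv' k hv hw cu c1 c2 n1 n2
      unfold Cyc at *; omega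
  · rcases h.side x' x x' (h.symm _ _ hx') (h.refl x') with k | k
    · refine absurd (h.symm _ _ (k u' ?_)) hux'
      clear hxv' k hv hw cu c1 cux cx' n1
      unfold Cyc at *; omega
    · exact k

/-- Without conflicts, on either orientation of the circle, two adjacent vertices `v`, `w` cannot
both fail to reach each other because of non-adjacent pairs on the two arcs between them. -/
theorem crossing (h : RoundRel A n p) (hno : ∀ u v, ¬ Conflict A p u v)
    (hno' : ∀ u v, ¬ Conflict A (fun x => n - 1 - p x) u v)
    {v w u x u' x' : V} (hvw : v ≠ w) (hAvw : A v w)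
    (hux : ¬ A u x) (hux' : ¬ A u' x')
    (h1 : gap n (p v) (p u) + gap n (p u) (p x) ≤ gap n (p v) (p w))
    (h2 : gap n (p w) (p u') + gap n (p u') (p x') ≤ gap n (p w) (p v)) :
    False := by
  have hAwv := h.symm _ _ hAvw
  have case1 := h.crossing_aux hno hvw hAvw hux hux' h1 h2
  have case2 := h.crossing_aux hno hvw.symm hAwv hux' hux h2 h1
  have univ_or : ∀ z, (∀ t, A z t) ∨ ∃ b, ¬ A z b := by
    intro z
    by_cases hz : ∀ t, A z t
    · exact Or.inl hz
    · push Not at hz; exact Or.inr hz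
  rcases univ_or v with uv | uv
  · rcases h.side w v w hAwv (h.refl w) with k | k
    · exact case1 (fun t _ => uv t) k
    · exact case2 k (fun t _ => uv t)
  rcases univ_or w with uw | uw
  · rcases h.side v v w (h.refl v) hAvw with k | k
    · exact case1 k (fun t _ => uw t)
    · exact case2 (fun t _ => uw t) k
  rcases h.side v v w (h.refl v) hAvw with k | k <;>
  rcases h.side w v w hAwv (h.refl w) with k' | k'
  · exact case1 k k'
  · exact hno v w ⟨hvw, hAvw, uv, uw, k, k'⟩
  · refine hno' v w ⟨hvw, hAvw, uv, uw, fun z hz => k z ?_, fun z hz => k' z ?_⟩ <;>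
    · have := h.lt v; have := h.lt w; have := h.lt z
      unfold Cyc at *
      dsimp only at hz
      omega
  · exact case2 k' k

/-- An arc ordering without conflicts yields a proper model: the arc of `v` starts at `v` and
goes on until some vertex met on the way would reach a non-neighbor of its own. -/
theorem pca_of_noConflict (G : SimpleGraph V) (h : RoundRel A n p) (hn : 0 < n)
    (hG : ∀ u v, u ≠ v → (G.Adj u v ↔ A u v))
    (hno : ∀ u v, ¬ Conflict A p u v)
    (hno' : ∀ u v, ¬ Conflict A (fun x => n - 1 - p x) u v) : IsPCAGraph G := by
  -- `T v` is one more than the reach of `v`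
  have hT : ∀ v, ∃ T, 1 ≤ T ∧ T ≤ n ∧
      (∀ u y, ¬ A u y → T ≤ gap n (p v) (p u) + gap n (p u) (p y)) ∧
      (T = n ∨ ∃ u y, ¬ A u y ∧ T = gap n (p v) (p u) + gap n (p u) (p y)) := by
    intro v
    let S : Set ℕ := {t | t = n ∨ ∃ u y, ¬ A u y ∧ t = gap n (p v) (p u) + gap n (p u) (p y)}
    have hmem : sInf S ∈ S := Nat.sInf_mem ⟨n, Or.inl rfl⟩
    refine ⟨sInf S, ?_, Nat.sInf_le (Or.inl rfl), fun u y huy =>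
      Nat.sInf_le (Or.inr ⟨u, y, huy, rfl⟩), hmem⟩
    rcases hmem with e | ⟨u, y, huy, e⟩
    · omega
    · have := h.ne_pos huy
      have := h.lt u; have := h.lt y
      rw [e]; unfold gap; split_ifs <;> omega
  choose T hT1 hTn hTle hTeq using hT
  have tri : ∀ u v, T u ≤ gap n (p u) (p v) + T v := by
    intro u v
    have := h.lt u; have := h.lt v
    rcases hTeq v with e | ⟨a, b, hab, e⟩
    · have := hTn u; omega
    · have := hTle u a b hab
      have := h.lt a
      unfold gap at *; split_ifs at * <;> omega
  have hadj : ∀ v w, v ≠ w → (A v w ↔ gap n (p v) (p w) < T v ∨ gap n (p w) (p v) < T w) := by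
    intro v w hvw
    have hne : p v ≠ p w := fun e => hvw (h.inj e)
    have := h.lt v; have := h.lt w
    have self : ∀ a b, gap n (p a) (p b) < T a → A a b := by
      intro a b hab
      by_contra hc
      have := hTle a a b hc
      have e : gap n (p a) (p a) = 0 := by unfold gap; simp
      omega
    constructor
    · intro hA
      by_contra hcon
      push Not at hcon
      have g1 : gap n (p v) (p w) < n := by unfold gap; split_ifs <;> omega
      have g2 : gap n (p w) (p v) < n := by unfold gap; split_ifs <;> omega
      rcases hTeq v with e | ⟨a, b, hab, e⟩
      · omega
      rcases hTeq w with e' | ⟨c, d, hcd, e'⟩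
      · omega
      exact h.crossing hno hno' hvw hA hab hcd (by omega) (by omega)
    · rintro (k | k)
      · exact self _ _ k
      · exact h.symm _ _ (self _ _ k)
  -- multiplication by `n + 1` leaves room to make the end points distinct
  have step : ∀ a b, a < b → (n + 1) * a + (n + 1) ≤ (n + 1) * b := fun a b hab => by nlinarith
  have exp : ∀ a b, (n + 1) * (a + b) = (n + 1) * a + (n + 1) * b := fun a b => by ring
  have step0 : ∀ a b, a ≤ b → (n + 1) * a ≤ (n + 1) * b := fun a b hab => by nlinarith
  have low : ∀ v, (n + 1) * (p v) + (n + 1) ≤ (n + 1) * (p v + T v) := fun v =>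
    step _ _ (by have := hT1 v; omega)
  refine pca_of_lift G ((n + 1) * n) (by positivity) (fun v => (n + 1) * p v)
    (fun v => (n + 1) * (p v + T v) - T v - 1) ?_ ?_ ?_ ?_ ?_ ?_
  · intro v; have := step _ _ (h.lt v); omega
  · intro v; have := low v; have := hTn v; omega
  · intro v
    have := low v; have := hT1 v; have := hTn v
    have := step0 (p v + T v) (p v + n) (by omega)
    have := exp (p v) n
    omega
  · intro u v e
    exact h.inj (Nat.eq_of_mul_eq_mul_left (by omega) e)
  · intro u v hlt
    have hlt : p u < p v := Nat.lt_of_mul_lt_mul_left hlt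
    have := low u; have := low v; have := hTn u; have := hTn v; have := hT1 u; have := hT1 v
    have t1 := tri u v
    have t2 := tri v u
    have := h.lt v
    have b1 : p u + T u ≤ p v + T v := by
      unfold gap at t1; rw [if_pos (by omega)] at t1; omega
    have b2 : p v + T v ≤ (p u + T u) + n := by
      unfold gap at t2; rw [if_neg (by omega)] at t2; omega
    have := exp (p u + T u) n
    constructor
    · rcases b1.eq_or_lt with e | e
      · have := congrArg (fun a => (n + 1) * a) e
        omega
      · have := step _ _ e; omega
    · rcases b2.eq_or_lt with e | e
      · have := congrArg (fun a => (n + 1) * a) e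
        omega
      · have := step _ _ e; omega
  · intro u v hlt
    have hlt : p u < p v := Nat.lt_of_mul_lt_mul_left hlt
    have hne : u ≠ v := by rintro rfl; omega
    rw [hG u v hne, hadj u v hne]
    have := low u; have := low v; have := hTn u; have := hTn v; have := hT1 u; have := hT1 v
    have := h.lt v
    have e1 : gap n (p u) (p v) = p v - p u := by unfold gap; rw [if_pos (by omega)]
    have e2 : gap n (p v) (p u) = p u + n - p v := by unfold gap; rw [if_neg (by omega)]
    rw [e1, e2]
    have x := exp (p u) n
    refine or_congr ⟨fun k => ?_, fun k => ?_⟩ ⟨fun k => ?_, fun k => ?_⟩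
    · have := step (p v) (p u + T u) (by omega); omega
    · by_contra hc
      have := step0 (p u + T u) (p v) (by omega); omega
    · have := step (p u + n) (p v + T v) (by omega); omega
    · by_contra hc
      have := step0 (p v + T v) (p u + n) (by omega); omega

end RoundRel

/-! ### Conflicting pairs: two cliques -/

namespace RoundRel

variable {V : Type*} {A : V → V → Prop} {n : ℕ} {p : V → ℕ}

theorem reflect (h : RoundRel A n p) : RoundRel A n (fun x => n - 1 - p x) where
  refl := h.refl
  symm := h.symm
  inj := by
    intro x y e
    have := h.lt x; have := h.lt y
    exact h.inj (by dsimp only at e; omega)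
  lt := by intro x; have := h.lt x; omega
  nc := by
    intro z a b c d h1 h2 ha hc
    have := h.lt a; have := h.lt b; have := h.lt c; have := h.lt d
    exact h.nc z c b a d (by unfold Cyc at *; omega) (by unfold Cyc at *; omega) hc ha

/-- A conflict between `u` and `v` splits the vertices into two cliques. Non-neighbors of a
vertex `z` of the arc `(v, u]` lie all in `(z, v)` or all in `(v, z)`, and those of a vertex `z`
of `(u, v]` lie all in `(u, z)` or all in `(z, u)`; in both cases the first alternative is taken
as the first clique. -/
theorem cobipartite (h : RoundRel A n p) {u v : V} (hc : Conflict A p u v) :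
    ∃ P : V → Prop, (∀ x y, ¬ A x y → (P x ↔ ¬ P y)) ∧ (∀ x, (∀ y, A x y) → P x) := by
  classical
  obtain ⟨huv, hA, -, -, hu, hv⟩ := hc
  have hne : p u ≠ p v := fun e => huv (h.inj e)
  -- the open arc `(v, u)` contains no non-neighbor of `v`, and `(u, v)` none of `u`
  have bv : ∀ y, ¬ A v y → Cyc (p u) (p y) (p v) := by
    intro y hy
    have n1 := h.ne_pos hy
    have n2 : p y ≠ p u := fun e => hy (by rw [h.inj e]; exact h.symm _ _ hA)
    by_contra hcon
    exact hy (hv y (by unfold Cyc at *; omega))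
  have bu : ∀ y, ¬ A u y → Cyc (p v) (p y) (p u) := by
    intro y hy
    have n1 := h.ne_pos hy
    have n2 : p y ≠ p v := fun e => hy (by rw [h.inj e]; exact hA)
    by_contra hcon
    exact hy (hu y (by unfold Cyc at *; omega))
  have sym' : ∀ x y, ¬ A x y → ¬ A y x := fun x y k k' => k (h.symm _ _ k')
  let I : V → Prop := fun z => z = u ∨ Cyc (p v) (p z) (p u)
  have hI : ∀ z, I z ↔ p z = p u ∨ Cyc (p v) (p z) (p u) := fun z =>
    or_congr ⟨fun e => by rw [e], fun e => h.inj e⟩ Iff.rfl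
  -- vertices of `(v, u]` are adjacent to `v`, those of `(u, v]` to `u`
  have Iv : ∀ z, I z → A z v := by
    intro z hz
    by_contra k
    have := bv z (sym' _ _ k)
    rw [hI] at hz
    unfold Cyc at *; omega
  have Ju : ∀ z, ¬ I z → A z u := by
    intro z hz
    by_contra k
    exact hz (Or.inr (bu z (sym' _ _ k)))
  have two : ∀ z w y y', A z w → ¬ A z y → ¬ A z y' → Cyc (p z) (p y) (p w) →
      Cyc (p z) (p y') (p w) := by
    intro z w y y' hw hy hy' hcyc
    by_contra hcon
    have n1 := h.ne_pos hy'
    have n2 : p w ≠ p y' := fun e => by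
      have := h.inj e
      subst this
      exact hy' hw
    rcases h.nc z z y w y' hcyc (by unfold Cyc at *; omega) (h.refl z) hw with k | k
    · exact hy k
    · exact hy' k
  let P : V → Prop := fun z =>
    if I z then ∀ y, ¬ A z y → Cyc (p z) (p y) (p v) else ∀ y, ¬ A z y → Cyc (p u) (p y) (p z)
  have PI : ∀ z y, I z → ¬ A z y → (P z ↔ Cyc (p z) (p y) (p v)) := by
    intro z y hz hy
    simp only [P, if_pos hz]
    exact ⟨fun k => k y hy, fun k y' hy' => two z v y y' (Iv z hz) hy hy' k⟩
  have PJ : ∀ z y, ¬ I z → ¬ A z y → (P z ↔ ¬ Cyc (p z) (p y) (p u)) := by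
    intro z y hz hy
    simp only [P, if_neg hz]
    constructor
    · intro k
      have := k y hy
      unfold Cyc at *; omega
    · intro k y' hy'
      have n1 := h.ne_pos hy'
      have n2 : p u ≠ p y' := fun e => by
        have := h.inj e
        subst this
        exact hy' (Ju z hz)
      have n3 : p z ≠ p u := fun e => hz (Or.inl (h.inj e))
      by_contra hcon
      exact k (two z u y' y (Ju z hz) hy' hy (by unfold Cyc at *; omega))
  refine ⟨P, ?_, ?_⟩
  · intro x y hxy
    have hyx := sym' _ _ hxy
    have n0 := h.ne_pos hxy
    have e1 := hI x
    have e2 := hI y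
    by_cases hx : I x <;> by_cases hy : I y
    · rw [PI x y hx hxy, PI y x hy hyx]
      have n1 : p x ≠ p v := fun e => by rw [e1] at hx; unfold Cyc at hx; omega
      have n2 : p y ≠ p v := fun e => by rw [e2] at hy; unfold Cyc at hy; omega
      unfold Cyc; omega
    · rw [PI x y hx hxy, PJ y x hy hyx, not_not]
      have n1 : p y ≠ p v ∨ p y = p v := by omega
      rw [e1] at hx; rw [e2] at hy
      have f1 : p y = p v → Cyc (p u) (p x) (p v) := fun e => by
        rw [h.inj e] at hyx; exact bv x hyx
      have f2 : p x = p u → Cyc (p v) (p y) (p u) := fun e => by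
        rw [h.inj e] at hxy; exact bu y hxy
      clear e1 e2 PI PJ two hu hv bu bv
      unfold Cyc at *; omega
    · rw [PJ x y hx hxy, PI y x hy hyx]
      rw [e1] at hx; rw [e2] at hy
      have f1 : p x = p v → Cyc (p u) (p y) (p v) := fun e => by
        rw [h.inj e] at hxy; exact bv y hxy
      have f2 : p y = p u → Cyc (p v) (p x) (p u) := fun e => by
        rw [h.inj e] at hyx; exact bu x hyx
      clear e1 e2 PI PJ two hu hv bu bv
      unfold Cyc at *; omega
    · rw [PJ x y hx hxy, PJ y x hy hyx]
      rw [e1] at hx; rw [e2] at hy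
      clear e1 e2 PI PJ two hu hv bu bv
      unfold Cyc at *; omega
  · intro x hx
    by_cases k : I x
    · simp only [P, if_pos k]; exact fun y hy => absurd (hx y) hy
    · simp only [P, if_neg k]; exact fun y hy => absurd (hx y) hy

end RoundRel

/-- A graph whose vertices split into cliques `P` and `¬ P` is a proper circular-arc graph if the
non-neighbors of each `x` in `P` form an interval `[l x, r x]` of a linear order `pos` of the
other clique, and none of these intervals lies strictly inside another one. The arcs of `P` start
in the order of `l x + r x`, those of the other clique follow in the order of `pos`. -/
theorem pca_of_twoCliques {V : Type*} (G : SimpleGraph V) (n : ℕ) (P : V → Prop)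
    (pos l r : V → ℕ) (hinj : Function.Injective pos) (hpos : ∀ x, pos x < n)
    (hl1 : ∀ x, P x → 1 ≤ l x) (hln : ∀ x, P x → l x < n) (hr : ∀ x, P x → r x < n)
    (cmp : ∀ x y, P x → P y → (l x ≤ l y ∧ r x ≤ r y) ∨ (l y ≤ l x ∧ r y ≤ r x))
    (hA : ∀ x z, P x → ¬ P z → (G.Adj x z ↔ ¬ (l x ≤ pos z ∧ pos z ≤ r x)))
    (hPP : ∀ x y, P x → P y → x ≠ y → G.Adj x y)
    (hQQ : ∀ x y, ¬ P x → ¬ P y → x ≠ y → G.Adj x y)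
    (hQ : ∀ z, ¬ P z → 1 ≤ pos z ∧ ∃ x, P x ∧ l x ≤ pos z ∧ pos z ≤ r x)
    (hn : 0 < n) : IsPCAGraph G := by
  classical
  let R : V → ℕ := fun x => (l x + r x) * n + pos x
  have hR : ∀ x y, P x → P y → R x ≤ R y → l x ≤ l y ∧ r x ≤ r y := by
    intro x y hx hy hxy
    have h1 : l x + r x ≤ l y + r y := by
      by_contra hc
      have h2 : (l y + r y + 1) * n ≤ (l x + r x) * n := Nat.mul_le_mul_right _ (by omega)
      have := hpos y
      have h3 : (l y + r y + 1) * n = (l y + r y) * n + n := by ring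
      simp only [R] at hxy
      omega
    rcases cmp x y hx hy with k | k <;> omega
  have hRinj : ∀ x y, P x → P y → R x = R y → x = y := by
    intro x y hx hy e
    have h1 := hR x y hx hy e.le
    have h2 := hR y x hy hx e.ge
    apply hinj
    have : l x + r x = l y + r y := by omega
    simp only [R, this] at e
    omega
  obtain ⟨K, hK⟩ : ∃ K, ∀ x, P x → R x < K := by
    refine ⟨2 * n * n, fun x hx => ?_⟩
    have h1 := hln x hx; have h2 := hr x hx; have h3 := hpos x
    have h4 : (l x + r x + 1) * n ≤ 2 * n * n := Nat.mul_le_mul_right _ (by omega)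
    have h5 : (l x + r x + 1) * n = (l x + r x) * n + n := by ring
    simp only [R]; omega
  clear_value R
  have hm : ∀ z, ∃ m, ¬ P z → (∃ x, P x ∧ l x ≤ pos z ∧ pos z ≤ r x ∧ R x = m) ∧
      ∀ x, P x → l x ≤ pos z → pos z ≤ r x → m ≤ R x := by
    intro z
    let S : Set ℕ := {m | ∃ x, P x ∧ l x ≤ pos z ∧ pos z ≤ r x ∧ R x = m}
    refine ⟨sInf S, fun hz => ?_⟩
    obtain ⟨-, x, hx, h1, h2⟩ := hQ z hz
    exact ⟨Nat.sInf_mem (s := S) ⟨R x, x, hx, h1, h2, rfl⟩, fun y hy k1 k2 =>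
      Nat.sInf_le ⟨y, hy, k1, k2, rfl⟩⟩
  choose m hm using hm
  have hmK : ∀ z, ¬ P z → m z < K := by
    intro z hz
    obtain ⟨⟨x, hx, -, -, e⟩, -⟩ := hm z hz
    rw [← e]; exact hK x hx
  have hmono : ∀ z w, ¬ P z → ¬ P w → pos z ≤ pos w → m z ≤ m w := by
    intro z w hz hw hzw
    obtain ⟨⟨x, hx, hx1, hx2, ex⟩, hmz⟩ := hm z hz
    obtain ⟨⟨y, hy, hy1, hy2, ey⟩, -⟩ := hm w hw
    by_contra hc
    have := hR y x hy hx (by omega)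
    have := hmz y hy (by omega) (by omega)
    omega
  have hadj : ∀ x z, P x → ¬ P z → (G.Adj x z ↔ pos z < l x ∨ R x < m z) := by
    intro x z hx hz
    rw [hA x z hx hz]
    obtain ⟨⟨y, hy, hy1, hy2, ey⟩, hmz⟩ := hm z hz
    constructor
    · intro k
      by_contra hc
      have := hR y x hy hx (by omega)
      omega
    · rintro (k | k) ⟨k1, k2⟩
      · omega
      · have := hmz x hx k1 k2
        omega
  -- `φ` spreads the points, leaving room for `K + n` distinct end points in each gap
  obtain ⟨φ, hφ⟩ : ∃ φ : ℕ → ℕ, ∀ a b, a < b → φ a + (K + n + 1) ≤ φ b := by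
    refine ⟨fun a => (K + n + 1) * a, fun a b hab => ?_⟩
    have := Nat.mul_le_mul_left (K + n + 1) (Nat.succ_le_of_lt hab)
    dsimp only
    rw [Nat.mul_succ] at this
    exact this
  have hφ' : ∀ a b, a ≤ b → φ a ≤ φ b := by
    intro a b hab
    rcases hab.eq_or_lt with rfl | k
    · exact le_rfl
    · have := hφ a b k; omega
  let N := φ (K + n)
  let s : V → ℕ := fun z => if P z then φ (R z + 1) else φ (K + pos z)
  let e : V → ℕ := fun z => if P z then φ (K + (l z - 1)) + R z else N + φ (m z) + pos z
  have sP : ∀ z, P z → s z = φ (R z + 1) := fun z hz => if_pos hz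
  have sQ : ∀ z, ¬ P z → s z = φ (K + pos z) := fun z hz => if_neg hz
  have eP : ∀ z, P z → e z = φ (K + (l z - 1)) + R z := fun z hz => if_pos hz
  have eQ : ∀ z, ¬ P z → e z = N + φ (m z) + pos z := fun z hz => if_neg hz
  have hNe : N = φ (K + n) := rfl
  clear_value N s e
  have fP : ∀ z, P z → s z ≤ φ K ∧ φ K ≤ e z ∧ e z + 1 < N ∧ R z < K := by
    intro z hz
    rw [sP z hz, eP z hz, hNe]
    have k := hK z hz; have := hl1 z hz; have := hln z hz
    have := hφ' (R z + 1) K (by omega)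
    have := hφ' K (K + (l z - 1)) (by omega)
    have := hφ (K + (l z - 1)) (K + n) (by omega)
    omega
  have fQ : ∀ z, ¬ P z → φ K < s z ∧ s z < N ∧ N ≤ e z ∧ e z + 1 < φ K + N := by
    intro z hz
    rw [sQ z hz, eQ z hz, hNe]
    have := hmK z hz; have := hpos z; have := (hQ z hz).1
    have := hφ K (K + pos z) (by omega)
    have := hφ (K + pos z) (K + n) (by omega)
    have := hφ (m z) K (by omega)
    omega
  have lt_of : ∀ a b, φ a < φ b → a < b := by
    intro a b k
    by_contra hc
    have := hφ' b a (by omega); omega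
  have cross : ∀ x z, P x → ¬ P z → (G.Adj x z ↔ s z ≤ e x ∨ s x + N ≤ e z) := by
    intro x z hx hz
    rw [hadj x z hx hz, sP x hx, eP x hx, sQ z hz, eQ z hz]
    have := hl1 x hx; have := (fP x hx).2.2.2; have := hpos z
    refine or_congr ⟨fun k => ?_, fun k => ?_⟩ ⟨fun k => ?_, fun k => ?_⟩
    · have := hφ' (K + pos z) (K + (l x - 1)) (by omega); omega
    · by_contra hc
      have := hφ (K + (l x - 1)) (K + pos z) (by omega); omega
    · have := hφ' (R x + 1) (m z) (by omega); omega
    · by_contra hc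
      have := hφ (m z) (R x + 1) (by omega); omega
  refine pca_of_lift G N ?_ s e ?_ ?_ ?_ ?_ ?_ ?_
  · have := hφ K (K + n) (by omega); omega
  · intro z
    by_cases hz : P z
    · have := fP z hz; omega
    · have := fQ z hz; omega
  · intro z
    by_cases hz : P z
    · have := fP z hz; omega
    · have := fQ z hz; omega
  · intro z
    by_cases hz : P z
    · have := fP z hz; omega
    · have := fQ z hz; omega
  · intro x y k
    by_cases hx : P x <;> by_cases hy : P y
    · rw [sP x hx, sP y hy] at k
      apply hRinj x y hx hy
      rcases lt_trichotomy (R x) (R y) with c | c | c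
      · have := hφ (R x + 1) (R y + 1) (by omega); omega
      · exact c
      · have := hφ (R y + 1) (R x + 1) (by omega); omega
    · have := fP x hx; have := fQ y hy; omega
    · have := fQ x hx; have := fP y hy; omega
    · rw [sQ x hx, sQ y hy] at k
      apply hinj
      rcases lt_trichotomy (pos x) (pos y) with c | c | c
      · have := hφ (K + pos x) (K + pos y) (by omega); omega
      · exact c
      · have := hφ (K + pos y) (K + pos x) (by omega); omega
  · intro x y k
    by_cases hx : P x <;> by_cases hy : P y
    · have k1 := fP x hx; have k2 := fP y hy
      rw [sP x hx, sP y hy] at k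
      have := lt_of _ _ k
      have := hR x y hx hy (by omega)
      have := hφ' (K + (l x - 1)) (K + (l y - 1)) (by omega)
      have := eP x hx; have := eP y hy
      omega
    · have := fP x hx; have := fQ y hy; omega
    · have := fQ x hx; have := fP y hy; omega
    · have k1 := fQ x hx; have k2 := fQ y hy
      rw [sQ x hx, sQ y hy] at k
      have := lt_of _ _ k
      have := hmono x y hx hy (by omega)
      have := hφ' _ _ this
      have := eQ x hx; have := eQ y hy
      omega
  · intro x y k
    have hne : x ≠ y := by rintro rfl; omega
    by_cases hx : P x <;> by_cases hy : P y
    · have := fP x hx; have := fP y hy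
      exact ⟨fun _ => by omega, fun _ => hPP x y hx hy hne⟩
    · exact cross x y hx hy
    · have := fQ x hx; have := fP y hy; omega
    · have := fQ x hx; have := fQ y hy
      exact ⟨fun _ => by omega, fun _ => hQQ x y hx hy hne⟩

/-! ### From a tight arc ordering to a proper model -/

/-- A graph whose closed adjacency is a round relation is a proper circular-arc graph if the
relation is tight: whenever `N[j] ⊆ N[i]` and `i` is not universal, there are two consecutive
positions, one holding a vertex `a` of both neighborhoods and the other a vertex `b` of neither. -/
theorem RoundRel.pca_of_tight {V : Type*} {A : V → V → Prop} {n : ℕ} {p : V → ℕ}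
    (G : SimpleGraph V) (h : RoundRel A n p) (hn : 0 < n)
    (hG : ∀ u v, u ≠ v → (G.Adj u v ↔ A u v))
    (tight : ∀ i j, (∃ y, ¬ A i y) → (∀ y, A j y → A i y) →
      ∃ a b, (gap n (p a) (p b) = 1 ∨ gap n (p b) (p a) = 1) ∧
        A i a ∧ A j a ∧ ¬ A i b ∧ ¬ A j b) : IsPCAGraph G := by
  classical
  by_cases hno : (∀ u v, ¬ Conflict A p u v) ∧ ∀ u v, ¬ Conflict A (fun x => n - 1 - p x) u v
  · exact h.pca_of_noConflict G hn hG hno.1 hno.2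
  obtain ⟨P, hP, hPu, w1, w2, hw⟩ : ∃ P : V → Prop, (∀ x y, ¬ A x y → (P x ↔ ¬ P y)) ∧
      (∀ x, (∀ y, A x y) → P x) ∧ ∃ x y, ¬ A x y := by
    rw [not_and_or] at hno
    push Not at hno
    rcases hno with ⟨u, v, hc⟩ | ⟨u, v, hc⟩
    · obtain ⟨P, h1, h2⟩ := h.cobipartite hc
      exact ⟨P, h1, h2, u, hc.2.2.1⟩
    · obtain ⟨P, h1, h2⟩ := h.reflect.cobipartite hc
      exact ⟨P, h1, h2, u, hc.2.2.1⟩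
  have hn2 : 2 ≤ n := by
    have := h.ne_pos hw; have := h.lt w1; have := h.lt w2; omega
  obtain ⟨v0, hv0⟩ : ∃ v0, P v0 := by
    by_cases k : P w1
    · exact ⟨w1, k⟩
    · exact ⟨w2, by have := hP _ _ hw; tauto⟩
  have clique : ∀ x y, P x → P y → A x y := by
    intro x y hx hy
    by_contra k
    exact (hP x y k).1 hx hy
  -- positions counted from a vertex of `P`: no set of non-neighbors of `x ∈ P` passes through it
  let pos : V → ℕ := fun z => gap n (p v0) (p z)
  have hpos : ∀ z, pos z < n := by
    intro z
    have := h.lt v0; have := h.lt z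
    simp only [pos]; unfold gap; split_ifs <;> omega
  have hposinj : Function.Injective pos := by
    intro x y e
    have := h.lt v0; have := h.lt x; have := h.lt y
    apply h.inj
    simp only [pos] at e; unfold gap at e; split_ifs at e <;> omega
  have hconv : ∀ x a b c, P x → ¬ A x a → ¬ A x c → pos a ≤ pos b → pos b ≤ pos c →
      ¬ A x b := by
    intro x a b c hx ha hc hab hbc hb
    have hv := clique x v0 hx hv0
    have n1 : p v0 ≠ p a := fun e => by rw [h.inj e] at hv; exact ha hv
    have n2 : p a ≠ p b := fun e => by rw [h.inj e] at ha; exact ha hb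
    have n3 : p c ≠ p b := fun e => by rw [h.inj e] at hc; exact hc hb
    have := h.lt v0; have := h.lt a; have := h.lt b; have := h.lt c
    have c1 : Cyc (p v0) (p a) (p b) := by
      clear hbc
      simp only [pos] at hab; unfold Cyc; unfold gap at hab; split_ifs at hab <;> omega
    have c2 : Cyc (p b) (p c) (p v0) := by
      have n4 : p v0 ≠ p c := fun e => by rw [h.inj e] at hv; exact hc hv
      have n5 : p b ≠ p v0 := by unfold Cyc at c1; omega
      clear hab c1
      simp only [pos] at hbc; unfold Cyc; unfold gap at hbc; split_ifs at hbc <;> omega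
    rcases h.nc x v0 a b c c1 c2 hv hb with k | k
    · exact ha k
    · exact hc k
  have hlr : ∀ x, ∃ l r, P x → 1 ≤ l ∧ l < n ∧ r < n ∧
      (∀ z, ¬ A x z ↔ l ≤ pos z ∧ pos z ≤ r) ∧
      ((l = 1 ∧ r = 0) ∨ ∃ y, ¬ A x y) := by
    intro x
    by_cases hu : ∃ y, ¬ A x y
    · let S : Set ℕ := {t | ∃ y, ¬ A x y ∧ pos y = t}
      have hS : S.Nonempty := by
        obtain ⟨y, hy⟩ := hu
        exact ⟨_, y, hy, rfl⟩
      have hb : BddAbove S := ⟨n, by rintro _ ⟨y, -, rfl⟩; exact (hpos y).le⟩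
      refine ⟨sInf S, sSup S, fun hx => ?_⟩
      obtain ⟨a, ha, ea⟩ : sInf S ∈ S := Nat.sInf_mem hS
      obtain ⟨c, hc, ec⟩ : sSup S ∈ S := Nat.sSup_mem hS hb
      have hlo : ∀ z, ¬ A x z → sInf S ≤ pos z := fun z hz => Nat.sInf_le ⟨z, hz, rfl⟩
      have hhi : ∀ z, ¬ A x z → pos z ≤ sSup S := fun z hz => le_csSup hb ⟨z, hz, rfl⟩
      rw [← ea, ← ec] at *
      refine ⟨?_, hpos a, hpos c, fun z => ⟨fun hz => ⟨hlo z hz, hhi z hz⟩, fun hz =>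
        hconv x a z c hx ha hc hz.1 hz.2⟩, Or.inr hu⟩
      by_contra k
      have e : pos a = pos v0 := by
        have : pos v0 = 0 := by simp [pos, gap]
        omega
      rw [hposinj e] at ha
      exact ha (clique x v0 hx hv0)
    · refine ⟨1, 0, fun _ => ⟨le_rfl, hn2, hn, fun z => ⟨fun hz => absurd ⟨z, hz⟩ hu, fun hz => ?_⟩,
        Or.inl ⟨rfl, rfl⟩⟩⟩
      omega
  choose l r hlr using hlr
  have nested : ∀ x y, P x → P y → l x < l y → r y < r x → False := by
    intro x y hx hy h1 h2
    obtain ⟨x1, x2, x3, x4, -⟩ := hlr x hx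
    obtain ⟨y1, y2, y3, y4, y5⟩ := hlr y hy
    rcases y5 with k | k
    · omega
    obtain ⟨a, b, hab, -, hxa, hyb, -⟩ := tight y x k (fun z hz => by
      by_contra hc
      have := (y4 z).1 hc
      exact (x4 z).2 ⟨by omega, by omega⟩ hz)
    refine (x4 a).2 ?_ hxa
    have hb := (y4 b).1 hyb
    have := h.lt v0; have := h.lt a; have := h.lt b
    have key : pos b = pos a + 1 ∨ pos a = pos b + 1 := by
      have k1 : 1 ≤ pos b := by omega
      have k2 : pos b + 1 < n := by omega
      clear hb
      simp only [pos] at *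
      unfold gap at *
      split_ifs at * <;> omega
    omega
  refine pca_of_twoCliques G n P pos l r hposinj hpos (fun x hx => (hlr x hx).1)
    (fun x hx => (hlr x hx).2.1) (fun x hx => (hlr x hx).2.2.1) ?_ ?_ ?_ ?_ ?_ hn
  · intro x y hx hy
    have k1 : ¬ (l x < l y ∧ r y < r x) := fun q => nested x y hx hy q.1 q.2
    have k2 : ¬ (l y < l x ∧ r x < r y) := fun q => nested y x hy hx q.1 q.2
    omega
  · intro x z hx hz
    rw [hG x z (by rintro rfl; exact hz hx), ← (hlr x hx).2.2.2.1 z, not_not]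
  · intro x y hx hy hxy
    exact (hG x y hxy).2 (clique x y hx hy)
  · intro x y hx hy hxy
    rw [hG x y hxy]
    by_contra k
    exact hx ((hP x y k).2 hy)
  · intro z hz
    constructor
    · by_contra k
      have e : pos z = pos v0 := by
        have : pos v0 = 0 := by simp [pos, gap]
        omega
      rw [hposinj e] at hz
      exact hz hv0
    · have : ∃ y, ¬ A z y := by
        by_contra k
        push Not at k
        exact hz (hPu z k)
      obtain ⟨y, hy⟩ := this
      have hPy : P y := by have := hP z y hy; tauto
      exact ⟨y, hPy, ((hlr y hPy).2.2.2.1 z).1 (fun k => hy (h.symm _ _ k))⟩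

theorem gap_pred {n : ℕ} [NeZero n] (a b : ZMod n) (hab : a ≠ b) (h : b = a + 1) :
    gap n a.val b.val = 1 := by
  rw [← val_sub_gap, h, add_sub_cancel_left, ZMod.val_one'']
  rintro rfl
  exact hab (Subsingleton.elim _ _)

theorem pca_of_tightOrdering {V : Type*} [Fintype V] [Nonempty V] (G : SimpleGraph V)
    (f : V ≃ ZMod (Fintype.card V))
    (hf : IsTightArcOrderingFam (fun v => ClosedNbhd G v) (Fintype.card V) f) :
    IsPCAGraph G := by
  have : NeZero (Fintype.card V) := ⟨Fintype.card_ne_zero⟩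
  obtain ⟨harc, htight⟩ := hf
  let A : V → V → Prop := fun x y => y ∈ ClosedNbhd G x
  have hmem : ∀ x y, f y ∈ f '' ClosedNbhd G x ↔ A x y := fun x y => by
    rw [f.injective.mem_set_image]
  have hmem' : ∀ x y, y ∈ f '' ClosedNbhd G x ↔ A x (f.symm y) := fun x y => by
    rw [← hmem, f.apply_symm_apply]
  have hR : RoundRel A (Fintype.card V) (fun v => (f v).val) := by
    refine ⟨fun x => Or.inl rfl, ?_, ?_, fun x => ZMod.val_lt _, ?_⟩
    · rintro x y (k | k)
      · exact Or.inl k.symm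
      · exact Or.inr k.symm
    · exact (ZMod.val_injective _).comp f.injective
    · intro z a b c d h1 h2 ha hc
      have := (harc z).noncrossing (f a) (f b) (f c) (f d) h1 h2 ((hmem z a).2 ha)
        ((hmem z c).2 hc)
      rwa [hmem, hmem] at this
  refine hR.pca_of_tight G Fintype.card_pos ?_ ?_
  · intro u v huv
    constructor
    · exact fun k => Or.inr k.symm
    · rintro (k | k)
      · exact absurd k.symm huv
      · exact k.symm
  · rintro i j ⟨y, hy⟩ hij
    have hne : f '' ClosedNbhd G i ≠ Set.univ := by
      intro e
      have := (hmem i y).1 (by rw [e]; trivial)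
      exact hy this
    rcases htight i j hij ⟨j, Or.inl rfl⟩ hne with ⟨a, h1, h2, h3, h4⟩ | ⟨a, h1, h2, h3, h4⟩
    · refine ⟨f.symm a, f.symm (a - 1), Or.inr ?_, (hmem' _ _).1 h1, (hmem' _ _).1 h3,
        fun k => h2 ((hmem' _ _).2 k), fun k => h4 ((hmem' _ _).2 k)⟩
      simp only [f.apply_symm_apply]
      refine gap_pred _ _ (fun e => ?_) (by ring)
      rw [e] at h2
      exact h2 h1
    · refine ⟨f.symm a, f.symm (a + 1), Or.inl ?_, (hmem' _ _).1 h1, (hmem' _ _).1 h3,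
        fun k => h2 ((hmem' _ _).2 k), fun k => h4 ((hmem' _ _).2 k)⟩
      simp only [f.apply_symm_apply]
      refine gap_pred _ _ (fun e => ?_) rfl
      rw [← e] at h2
      exact h2 h1

/-! ### From a proper model to a tight arc ordering -/

theorem exists_end {n : ℕ} [NeZero n] {S : Set (ZMod n)} (h1 : S.Nonempty) (h2 : S ≠ Set.univ) :
    ∃ a ∈ S, a + 1 ∉ S := by
  by_contra hcon
  push Not at hcon
  obtain ⟨s, hs⟩ := h1
  have key : ∀ k : ℕ, s + (k : ZMod n) ∈ S := by
    intro k
    induction k with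
    | zero => simpa using hs
    | succ k ih =>
      have := hcon _ ih
      push_cast
      rwa [← add_assoc]
  apply h2
  rw [Set.eq_univ_iff_forall]
  intro x
  have := key (x - s).val
  simpa using this

theorem exists_start {n : ℕ} [NeZero n] {S : Set (ZMod n)} (h1 : S.Nonempty)
    (h2 : S ≠ Set.univ) : ∃ a ∈ S, a - 1 ∉ S := by
  have h3 : (Sᶜ).Nonempty := Set.nonempty_compl.2 h2
  have h4 : Sᶜ ≠ Set.univ := fun e => h1.ne_empty (Set.compl_univ_iff.1 e)
  obtain ⟨a, ha, ha'⟩ := exists_end h3 h4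
  exact ⟨a + 1, not_not.1 ha', by simpa using ha⟩

/-- Converse of `IsArc.noncrossing`. -/
theorem isArc_of_noncrossing {n : ℕ} [NeZero n] (S : Set (ZMod n))
    (hnc : ∀ a b c d : ZMod n, Cyc a.val b.val c.val → Cyc c.val d.val a.val →
      a ∈ S → c ∈ S → b ∈ S ∨ d ∈ S) : IsArc n S := by
  classical
  rw [isArc_iff]
  have hgap : ∀ a x : ZMod n, gap n a.val x.val < n := fun a x => by
    rw [← val_sub_gap]; exact ZMod.val_lt _
  by_cases h1 : S = Set.univ
  · exact ⟨0, n, le_rfl, fun x => by have := hgap 0 x; simpa [h1] using this⟩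
  by_cases h2 : S.Nonempty
  · obtain ⟨a, ha, ha'⟩ := exists_start h2 h1
    have hadd : ∀ x : ZMod n, x = a + ((gap n a.val x.val : ℕ) : ZMod n) := fun x => by
      rw [← val_sub_gap]; simp
    have hex : ∃ k : ℕ, a + (k : ZMod n) ∉ S := ⟨gap n a.val (a - 1).val, by rwa [← hadd]⟩
    have hk : a + (Nat.find hex : ZMod n) ∉ S := Nat.find_spec hex
    have hmin : ∀ j < Nat.find hex, a + (j : ZMod n) ∈ S := fun j hj =>
      not_not.1 (Nat.find_min hex hj)
    have hkle : Nat.find hex ≤ gap n a.val (a - 1).val := Nat.find_min' hex (by rwa [← hadd])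
    generalize Nat.find hex = k at *
    have hkn : k < n := hkle.trans_lt (hgap _ _)
    refine ⟨a, k, hkn.le, fun x => ⟨fun hx => ?_, fun hx => ?_⟩⟩
    · by_contra hc
      have hb : gap n a.val (a + (k : ZMod n)).val = k := by
        rw [← val_sub_gap, add_sub_cancel_left, ZMod.val_natCast_of_lt hkn]
      have hd : gap n (a - 1).val a.val = 1 :=
        gap_pred _ _ (fun e => ha' (by rwa [e])) (by ring)
      have k0 : k ≠ 0 := by rintro rfl; exact hk (by simpa using ha)
      have n1 : gap n a.val x.val ≠ k := fun e => by
        rw [hadd x, e] at hx; exact hk hx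
      have n2 : x.val ≠ (a - 1).val := fun e => by
        rw [ZMod.val_injective _ e] at hx; exact ha' hx
      have := a.val_lt; have := x.val_lt; have := (a - 1).val_lt
      have := (a + (k : ZMod n)).val_lt
      rcases hnc a (a + (k : ZMod n)) x (a - 1)
        (by clear hd hkle n2; unfold Cyc; unfold gap at *; split_ifs at * <;> omega)
        (by clear hb; unfold Cyc; unfold gap at *; split_ifs at * <;> omega) ha hx with q | q
      · exact hk q
      · exact ha' q
    · rw [hadd x]; exact hmin _ hx
  · refine ⟨0, 0, Nat.zero_le _, fun x => ⟨fun hx => absurd ⟨x, hx⟩ h2, fun hx => ?_⟩⟩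
    omega

/-- The arcs `[s v, s v + k v - 1]` of a proper model, in natural number coordinates. -/
theorem IsPCAGraph.coords {V : Type*} {G : SimpleGraph V} (h : IsPCAGraph G) :
    ∃ (N : ℕ) (s k : V → ℕ), (∀ v, s v < N) ∧ (∀ v, 1 ≤ k v) ∧ (∀ v, k v ≤ N) ∧
      (∀ u v, u ≠ v → ∃ x < N, gap N (s u) x < k u ∧ ¬ gap N (s v) x < k v) ∧
      (∀ u v, u ≠ v → (G.Adj u v ↔ ∃ x < N, gap N (s u) x < k u ∧ gap N (s v) x < k v)) := by
  obtain ⟨N, hN, l, -, harc, hinc, hadj⟩ := h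
  have : NeZero N := ⟨hN.ne'⟩
  choose hne harc using harc
  simp only [isArc_iff] at harc
  choose a k hk hmem using harc
  refine ⟨N, fun v => (a v).val, k, fun v => ZMod.val_lt _, fun v => ?_, hk, ?_, ?_⟩
  · obtain ⟨x, hx⟩ := hne v
    have := (hmem v x).1 hx
    omega
  · intro u v huv
    obtain ⟨x, hx, hx'⟩ := Set.not_subset.1 (hinc u v huv)
    exact ⟨x.val, x.val_lt, (hmem u x).1 hx, fun q => hx' ((hmem v x).2 q)⟩
  · intro u v huv
    rw [hadj u v huv]
    constructor
    · rintro ⟨x, hx, hx'⟩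
      exact ⟨x.val, x.val_lt, (hmem u x).1 hx, (hmem v x).1 hx'⟩
    · rintro ⟨t, ht, h1, h2⟩
      refine ⟨(t : ZMod N), (hmem u _).2 ?_, (hmem v _).2 ?_⟩ <;>
      rwa [ZMod.val_natCast_of_lt ht]

/-- The points `b` and `d` separate `a` from `c` on the circle, so one of `a` and `c` is separated
from `i` by them. -/
theorem cyc_separation {i a b c d : ℕ} (h1 : Cyc a b c) (h2 : Cyc c d a) (nb : b ≠ i) (nd : d ≠ i)
    (qa : (¬ Cyc a b i ∧ ¬ Cyc a d i) ∨ (¬ Cyc i b a ∧ ¬ Cyc i d a))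
    (qc : (¬ Cyc c b i ∧ ¬ Cyc c d i) ∨ (¬ Cyc i b c ∧ ¬ Cyc i d c)) : False := by
  have side1 : Cyc d i b ∨ Cyc b i d := by
    clear qa qc; unfold Cyc at *; omega
  rcases side1 with q | q
  · have k1 : Cyc i b c := by clear qa qc; unfold Cyc at *; omega
    have k2 : Cyc c d i := by clear qa qc k1; unfold Cyc at *; omega
    tauto
  · have k1 : Cyc a b i := by clear qa qc; unfold Cyc at *; omega
    have k2 : Cyc i d a := by clear qa qc k1; unfold Cyc at *; omega
    tauto

set_option maxHeartbeats 1000000 in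
/-- The vertices of a proper circular-arc graph, ordered by the start points of their arcs, form a
tight arc ordering. -/
theorem tightOrdering_of_pca {V : Type*} [Fintype V] [Nonempty V] (G : SimpleGraph V)
    (h : IsPCAGraph G) : ∃ f : V ≃ ZMod (Fintype.card V),
      IsTightArcOrderingFam (fun v => ClosedNbhd G v) (Fintype.card V) f := by
  classical
  have : NeZero (Fintype.card V) := ⟨Fintype.card_ne_zero⟩
  obtain ⟨N, s, k, hs, hk1, hkN, hinc, hadj⟩ := h.coords
  have sinj : Function.Injective s := by
    intro u v e
    by_contra hne
    obtain ⟨x, hx, h1, h2⟩ := hinc u v hne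
    obtain ⟨y, hy, h3, h4⟩ := hinc v u (Ne.symm hne)
    rw [e] at h1 h4
    omega
  -- `L i u`: the arc of `u` contains the start of `i`; `R i u`: the other way round
  let L : V → V → Prop := fun i u => gap N (s u) (s i) < k u
  let R : V → V → Prop := fun i u => gap N (s i) (s u) < k i
  have hself : ∀ i, gap N (s i) (s i) < k i := fun i => by
    have := hk1 i; unfold gap; rw [if_pos le_rfl]; omega
  have hA : ∀ i u, u ∈ ClosedNbhd G i ↔ L i u ∨ R i u := by
    intro i u
    by_cases e : u = i
    · subst e
      exact ⟨fun _ => Or.inl (hself u), fun _ => Or.inl rfl⟩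
    · have : u ∈ ClosedNbhd G i ↔ G.Adj u i := ⟨fun q => q.resolve_left e, Or.inr⟩
      rw [this, hadj u i e]
      have b1 := hs u; have b2 := hs i; have := hkN u; have := hkN i
      constructor
      · rintro ⟨x, hx, h1, h2⟩
        simp only [L, R]
        unfold gap at *
        split_ifs at * <;> omega
      · rintro (q | q)
        · exact ⟨s i, b2, q, hself i⟩
        · exact ⟨s u, b1, hself u, q⟩
  have closedL : ∀ i u z, L i u → Cyc (s u) (s z) (s i) → L i z := by
    intro i u z hu hc
    have hne : z ≠ u := by rintro rfl; unfold Cyc at hc; omega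
    obtain ⟨x, hx, h1, h2⟩ := hinc z u hne
    have := hs u; have := hs i; have := hs z; have := hkN u; have := hkN z
    by_contra hcon
    simp only [L] at *
    clear hA
    unfold Cyc at hc
    unfold gap at *
    split_ifs at * <;> omega
  have closedR : ∀ i u z, R i u → Cyc (s i) (s z) (s u) → R i z := by
    intro i u z hu hc
    have := hs u; have := hs i; have := hs z
    simp only [R] at *
    unfold Cyc at hc
    unfold gap at *
    split_ifs at * <;> omega
  have cliqueL : ∀ i u w, L i u → L i w → w ∈ ClosedNbhd G u := by
    intro i u w hu hw
    by_cases e : w = u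
    · exact Or.inl e
    · exact Or.inr ((hadj w u e).2 ⟨s i, hs i, hw, hu⟩)
  -- the arcs of `R i` all contain the last point of the arc of `i`
  have cliqueR : ∀ i u w, R i u → R i w → w ∈ ClosedNbhd G u := by
    intro i u w hu hw
    obtain ⟨t, ht, hti⟩ : ∃ t < N, gap N (s i) t = k i - 1 := by
      have := hs i; have := hk1 i; have := hkN i
      refine ⟨if s i + (k i - 1) < N then s i + (k i - 1) else s i + (k i - 1) - N, ?_, ?_⟩
      · split_ifs <;> omega
      · unfold gap; split_ifs <;> omega
    have key : ∀ u, R i u → gap N (s u) t < k u := by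
      intro u hu
      by_cases e : u = i
      · subst e; have := hk1 u; omega
      · obtain ⟨x, hx, h1, h2⟩ := hinc u i e
        have := hs u; have := hs i; have := hkN u; have := hkN i; have := hk1 i
        simp only [R] at hu
        by_contra hcon
        unfold gap at *
        split_ifs at * <;> omega
    by_cases e : w = u
    · exact Or.inl e
    · exact Or.inr ((hadj w u e).2 ⟨t, ht, key w hw, key u hu⟩)
  -- the vertices are ordered by their start points
  let p : V → ℕ := fun v => (Finset.univ.filter fun u => s u < s v).card
  have hpn : ∀ v, p v < Fintype.card V := by
    intro v
    apply Finset.card_lt_univ_of_notMem (x := v)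
    simp
  have hple : ∀ u v, s u ≤ s v → p u ≤ p v := by
    intro u v huv
    apply Finset.card_le_card
    intro w
    simp only [Finset.mem_filter, Finset.mem_univ, true_and]
    omega
  have hplt : ∀ u v, s u < s v → p u < p v := by
    intro u v huv
    apply Finset.card_lt_card
    rw [Finset.ssubset_iff_of_subset]
    · exact ⟨u, by simpa using huv, by simp⟩
    · intro w
      simp only [Finset.mem_filter, Finset.mem_univ, true_and]
      omega
  have hp : ∀ u v, p u < p v ↔ s u < s v := by
    intro u v
    refine ⟨fun q => ?_, hplt u v⟩
    by_contra hc
    have := hple v u (by omega)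
    omega
  have hcyc : ∀ a b c, Cyc (p a) (p b) (p c) ↔ Cyc (s a) (s b) (s c) := by
    intro a b c
    simp only [Cyc, hp]
  have pinj : Function.Injective p := by
    intro u v e
    apply sinj
    have h1 := hp u v
    have h2 := hp v u
    omega
  let g : V → ZMod (Fintype.card V) := fun v => (p v : ZMod (Fintype.card V))
  have gval : ∀ v, (g v).val = p v := fun v => ZMod.val_natCast_of_lt (hpn v)
  have ginj : Function.Injective g := fun u v e => pinj (by rw [← gval, e, gval])
  have gbij : Function.Bijective g :=
    (Fintype.bijective_iff_injective_and_card g).2 ⟨ginj, (ZMod.card _).symm⟩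
  let f : V ≃ ZMod (Fintype.card V) := Equiv.ofBijective g gbij
  have fval : ∀ v, (f v).val = p v := gval
  have hmem : ∀ x y, f y ∈ f '' ClosedNbhd G x ↔ (L x y ∨ R x y) := fun x y => by
    rw [f.injective.mem_set_image, hA]
  refine ⟨f, ?_, ?_⟩
  · intro i
    apply isArc_of_noncrossing
    intro a b c d h1 h2 ha hc
    obtain ⟨a, rfl⟩ := f.surjective a
    obtain ⟨b, rfl⟩ := f.surjective b
    obtain ⟨c, rfl⟩ := f.surjective c
    obtain ⟨d, rfl⟩ := f.surjective d
    simp only [fval, hcyc] at h1 h2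
    dsimp only at *
    rw [hmem] at ha hc
    rw [hmem, hmem]
    by_contra hcon
    push Not at hcon
    obtain ⟨⟨hb1, hb2⟩, hd1, hd2⟩ := hcon
    have nb : s b ≠ s i := fun e => hb1 (by rw [sinj e]; exact hself i)
    have nd : s d ≠ s i := fun e => hd1 (by rw [sinj e]; exact hself i)
    have qa : (¬ Cyc (s a) (s b) (s i) ∧ ¬ Cyc (s a) (s d) (s i)) ∨
        (¬ Cyc (s i) (s b) (s a) ∧ ¬ Cyc (s i) (s d) (s a)) := by
      rcases ha with q | q
      · exact Or.inl ⟨fun e => hb1 (closedL i a b q e), fun e => hd1 (closedL i a d q e)⟩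
      · exact Or.inr ⟨fun e => hb2 (closedR i a b q e), fun e => hd2 (closedR i a d q e)⟩
    have qc : (¬ Cyc (s c) (s b) (s i) ∧ ¬ Cyc (s c) (s d) (s i)) ∨
        (¬ Cyc (s i) (s b) (s c) ∧ ¬ Cyc (s i) (s d) (s c)) := by
      rcases hc with q | q
      · exact Or.inl ⟨fun e => hb1 (closedL i c b q e), fun e => hd1 (closedL i c d q e)⟩
      · exact Or.inr ⟨fun e => hb2 (closedR i c b q e), fun e => hd2 (closedR i c d q e)⟩
    exact cyc_separation h1 h2 nb nd qa qc
  · intro i j hij _ hne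
    dsimp only at *
    have hnon : (f '' ClosedNbhd G i).Nonempty := ⟨f i, i, Or.inl rfl, rfl⟩
    have hsub : f '' ClosedNbhd G j ⊆ f '' ClosedNbhd G i := Set.image_mono hij
    have hj : L i j ∨ R i j := (hA i j).1 (hij (Or.inl rfl))
    rcases hj with hj | hj
    · left
      obtain ⟨a, ha, ha'⟩ := exists_start hnon hne
      obtain ⟨z, hz⟩ := f.surjective (a - 1)
      obtain ⟨a, rfl⟩ := f.surjective a
      refine ⟨f a, ha, ha', ?_, fun q => ha' (hsub q)⟩
      rw [f.injective.mem_set_image]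
      apply cliqueL i j a hj
      rw [hmem] at ha
      rw [← hz, hmem] at ha'
      by_contra hL
      have hRa := ha.resolve_left hL
      have e1 : gap _ (f z).val (f a).val = 1 :=
        gap_pred _ _ (fun e => ha' (by rw [f.injective e]; exact ha)) (by rw [hz]; ring)
      rw [fval, fval] at e1
      have n1 : p z ≠ p i := fun e => ha' (by rw [pinj e]; exact Or.inl (hself i))
      have n2 : p a ≠ p i := fun e => hL (by rw [pinj e]; exact hself i)
      refine ha' (Or.inr (closedR i a z hRa ((hcyc _ _ _).1 ?_)))
      have := hpn a; have := hpn z; have := hpn i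
      clear_value p
      unfold Cyc; unfold gap at e1; split_ifs at e1 <;> omega
    · right
      obtain ⟨a, ha, ha'⟩ := exists_end hnon hne
      obtain ⟨z, hz⟩ := f.surjective (a + 1)
      obtain ⟨a, rfl⟩ := f.surjective a
      refine ⟨f a, ha, ha', ?_, fun q => ha' (hsub q)⟩
      rw [f.injective.mem_set_image]
      apply cliqueR i j a hj
      rw [hmem] at ha
      rw [← hz, hmem] at ha'
      by_contra hR
      have hLa := ha.resolve_right hR
      have e1 : gap _ (f a).val (f z).val = 1 :=
        gap_pred _ _ (fun e => ha' (by rw [← f.injective e]; exact ha)) hz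
      rw [fval, fval] at e1
      have n1 : p z ≠ p i := fun e => ha' (by rw [pinj e]; exact Or.inl (hself i))
      have n2 : p a ≠ p i := fun e => hR (by rw [pinj e]; exact hself i)
      refine ha' (Or.inl (closedL i a z hLa ((hcyc _ _ _).1 ?_)))
      have := hpn a; have := hpn z; have := hpn i
      clear_value p
      unfold Cyc; unfold gap at e1; split_ifs at e1 <;> omega

/-- A finite simple graph `G` is a proper circular-arc graph iff
its closed neighborhood hypergraph `N[G]` admits a tight arc ordering. -/
theorem stmt1 {V : Type*} [Fintype V] [Nonempty V] (G : SimpleGraph V) :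
    IsPCAGraph G ↔ ∃ f : V ≃ ZMod (Fintype.card V),
      IsTightArcOrderingFam (fun v => ClosedNbhd G v) (Fintype.card V) f :=
  ⟨tightOrdering_of_pca G, fun ⟨f, hf⟩ => pca_of_tightOrdering G f hf⟩
end

section
/- If the closed neighborhood hypergraph N[G] of a finite simple graph G is a circular-arc hypergraph (i.e., G is concave-round), then G is a circular-arc graph. -/
/-!
The vertices sit on the circle `ZMod n` so that the non-neighborhood of each vertex is an arc.

Give each vertex `v` the arc `R v` running clockwise from `v` as long as it stays inside `N[v]`.
Two such arcs that meet belong to adjacent vertices, because one of them contains the start of the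
other. If every adjacent pair `u, v` satisfies `v ∈ R u` or `u ∈ R v`, this is a circular-arc model.

Otherwise there is an adjacent pair `i, j` such that `i` has a non-neighbor strictly between `i` and
`j` and `j` has a non-neighbor strictly between `j` and `i` (clockwise). This forces the complement
of `G` to be bipartite (`exists_coloring`): a vertex on one side of `{i, j}` is adjacent to `j`
(resp. `i`), so, after cutting the circle there, all its non-neighbors lie before it or all
lie after it; the color of a vertex combines that direction with its side. Let `A, B` be the color
classes with `i ∈ B`. Cutting the circle at `i` gives a linear order in which the non-neighborhood
of each `b ∈ B`, being contained in `A` and hence avoiding `i`, is an interval `[s, t]`. On a circle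
of length `2n` the arcs `[-a, n - a]` for `a ∈ A` and `[n - s + 1, 2n - t - 1]` for `b ∈ B` then
form a model (`model_of_coloring`).

Arcs are handled through natural number coordinates (`Hit`), and `isCAGraph_of_hit` turns such a
description into a model, refining the circle so that equal arcs become distinct.
-/

open Set

/-! ### Arcs in natural number coordinates -/

/-- On the circle of length `n`, the arc with start `s < n` and length `k ≤ n` contains `t < n`. -/
def Hit (n s k t : ℕ) : Prop := (s ≤ t ∧ t < s + k) ∨ t + n < s + k

/-- The arc of `ZMod n` with start `a` and length `k`. -/
def arc (n : ℕ) (a : ZMod n) (k : ℕ) : Set (ZMod n) :=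
  {x | ∃ i : ℕ, i < k ∧ x = a + (i : ZMod n)}

lemma mem_arc_iff {n : ℕ} [NeZero n] (a x : ZMod n) {k : ℕ} (hk : k ≤ n) :
    x ∈ arc n a k ↔ (x - a).val < k := by
  constructor
  · rintro ⟨i, hi, rfl⟩
    rw [add_sub_cancel_left, ZMod.val_natCast, Nat.mod_eq_of_lt (by omega)]
    exact hi
  · intro h
    exact ⟨_, h, by simp⟩

lemma val_sub_eq {n : ℕ} [NeZero n] {s t : ℕ} (hs : s < n) (ht : t < n) :
    ((t : ZMod n) - (s : ZMod n)).val = if s ≤ t then t - s else t + n - s := by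
  split_ifs with h
  · rw [← Nat.cast_sub h, ZMod.val_natCast, Nat.mod_eq_of_lt (by omega)]
  · have : ((t : ZMod n) - (s : ZMod n)) = ((t + n - s : ℕ) : ZMod n) := by
      rw [Nat.cast_sub (by omega)]
      simp
    rw [this, ZMod.val_natCast, Nat.mod_eq_of_lt (by omega)]

lemma mem_arc_iff_hit {n : ℕ} [NeZero n] {s t k : ℕ} (hs : s < n) (ht : t < n) (hk : k ≤ n) :
    (t : ZMod n) ∈ arc n (s : ZMod n) k ↔ Hit n s k t := by
  rw [mem_arc_iff _ _ hk, val_sub_eq hs ht, Hit]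
  split_ifs <;> omega

/-- Two arcs meet iff one of them contains the start of the other. -/
lemma arc_inter_nonempty {n : ℕ} [NeZero n] {s t k m : ℕ} (hs : s < n) (ht : t < n)
    (hk : k ≤ n) (hm : m ≤ n) (hk0 : 0 < k) (hm0 : 0 < m) :
    (arc n (s : ZMod n) k ∩ arc n (t : ZMod n) m).Nonempty ↔ Hit n s k t ∨ Hit n t m s := by
  constructor
  · rintro ⟨x, hx1, hx2⟩
    obtain ⟨y, hy, rfl⟩ : ∃ y : ℕ, y < n ∧ (y : ZMod n) = x :=
      ⟨x.val, ZMod.val_lt x, by simp⟩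
    rw [mem_arc_iff_hit hs hy hk] at hx1
    rw [mem_arc_iff_hit ht hy hm] at hx2
    unfold Hit at *
    omega
  · rintro (h | h)
    · exact ⟨_, (mem_arc_iff_hit hs ht hk).2 h, ⟨0, hm0, by simp⟩⟩
    · exact ⟨_, ⟨0, hk0, by simp⟩, (mem_arc_iff_hit ht hs hm).2 h⟩

lemma ncard_arc {n : ℕ} [NeZero n] (a : ZMod n) {k : ℕ} (hk : k ≤ n) :
    (arc n a k).ncard = k := by
  have h : arc n a k = ((Finset.range k).image (fun i : ℕ => a + (i : ZMod n)) : Finset (ZMod n)) := by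
    ext x
    simp [arc, eq_comm]
  rw [h, Set.ncard_coe_finset, Finset.card_image_of_injOn, Finset.card_range]
  intro i hi j hj hij
  simp only [Finset.coe_range, Set.mem_Iio] at hi hj
  have := congrArg ZMod.val (add_left_cancel hij)
  rwa [ZMod.val_natCast, ZMod.val_natCast, Nat.mod_eq_of_lt (by omega),
    Nat.mod_eq_of_lt (by omega)] at this

lemma hit_refine {n m s k t c : ℕ} (hc : c < m) (hk : 0 < k) :
    Hit (n * m) (s * m) ((k - 1) * m + c + 1) (t * m) ↔ Hit n s k t := by
  obtain ⟨k, rfl⟩ : ∃ k', k = k' + 1 := ⟨k - 1, by omega⟩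
  have key : ∀ x y : ℕ, x * m < y * m + (k * m + c + 1) ↔ x < y + (k + 1) := by
    intro x y
    constructor
    · intro h
      by_contra h'
      have : (y + k + 1) * m ≤ x * m := Nat.mul_le_mul_right _ (by omega)
      nlinarith
    · intro h
      have : x * m ≤ (y + k) * m := Nat.mul_le_mul_right _ (by omega)
      nlinarith
  have h2 : s * m ≤ t * m ↔ s ≤ t := Nat.mul_le_mul_right_iff (by omega)
  have h3 : t * m + n * m = (t + n) * m := by ring
  simp only [Hit, Nat.add_sub_cancel, h3, key, h2]

/-- A model by possibly repeated arcs gives a model by distinct arcs: every point of the circle is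
replaced by `|V|` points, and the last block of each arc is truncated to a length depending on the
vertex, so that the arcs have distinct sizes. -/
lemma isCAGraph_of_hit {V : Type*} [Fintype V] (G : SimpleGraph V) (n : ℕ) (s k : V → ℕ)
    (hs : ∀ v, s v < n) (hk0 : ∀ v, 0 < k v) (hk : ∀ v, k v ≤ n) (hV : 0 < Fintype.card V)
    (h : ∀ u v, u ≠ v → (G.Adj u v ↔ Hit n (s u) (k u) (s v) ∨ Hit n (s v) (k v) (s u))) :
    IsCAGraph G := by
  obtain ⟨m, hm⟩ : ∃ m, m = Fintype.card V := ⟨_, rfl⟩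
  let e := Fintype.equivFin V
  have hc : ∀ v, (e v : ℕ) < m := fun v => hm ▸ (e v).2
  have hm0 : 0 < m := hm ▸ hV
  obtain ⟨v₀⟩ := Fintype.card_pos_iff.1 hV
  have hn : 0 < n := (Nat.zero_le _).trans_lt (hs v₀)
  have hN : 0 < n * m := Nat.mul_pos hn hm0
  have : NeZero (n * m) := ⟨hN.ne'⟩
  have hlen : ∀ v, (k v - 1) * m + e v + 1 ≤ n * m := by
    intro v
    have h1 : (k v - 1 + 1) * m ≤ n * m :=
      Nat.mul_le_mul_right _ (by have := hk v; have := hk0 v; omega)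
    have := hc v
    nlinarith
  have hst : ∀ v, s v * m < n * m := fun v => Nat.mul_lt_mul_of_pos_right (hs v) hm0
  refine ⟨n * m, hN, fun v => arc (n * m) ((s v * m : ℕ) : ZMod (n * m)) ((k v - 1) * m + e v + 1),
    ?_, ?_, ?_⟩
  · intro u v huv
    have h1 := congrArg Set.ncard huv
    simp only [ncard_arc _ (hlen _)] at h1
    have h2 := congrArg (· % m) (Nat.succ_injective h1)
    simp only [Nat.mul_add_mod_self_right, Nat.mod_eq_of_lt (hc _)] at h2
    exact e.injective (Fin.ext h2)
  · intro v
    exact ⟨⟨_, 0, Nat.succ_pos _, rfl⟩, _, _, hlen v, rfl⟩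
  · intro u v huv
    rw [arc_inter_nonempty (hst u) (hst v) (hlen u) (hlen v) (Nat.succ_pos _) (Nat.succ_pos _),
      hit_refine (hc u) (hk0 u), hit_refine (hc v) (hk0 v)]
    exact h u v huv

/-- Membership in an arc does not alternate along four circularly ordered points. -/
lemma not_alternating {n : ℕ} [NeZero n] {S : Set (ZMod n)} (hS : IsArc n S) (o : ZMod n)
    {a b c d : ℕ} (hab : a < b) (hbc : b < c) (hcd : c < d) (hd : d < n) :
    ¬ (o + a ∈ S ∧ o + b ∉ S ∧ o + c ∈ S ∧ o + d ∉ S) ∧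
    ¬ (o + a ∉ S ∧ o + b ∈ S ∧ o + c ∉ S ∧ o + d ∈ S) := by
  obtain ⟨a₀, k, hk, hS⟩ := hS
  have hS' : S = arc n a₀ k := hS
  have hr : (o - a₀).val < n := ZMod.val_lt _
  have key : ∀ x : ℕ, x < n → (o + x ∈ S ↔
      if (o - a₀).val + x < n then (o - a₀).val + x < k else (o - a₀).val + x - n < k) := by
    intro x hx
    rw [hS', mem_arc_iff _ _ hk]
    have : o + x - a₀ = (((o - a₀).val + x : ℕ) : ZMod n) := by
      push_cast
      rw [ZMod.natCast_zmod_val]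
      ring
    rw [this, ZMod.val_natCast]
    split_ifs with h
    · rw [Nat.mod_eq_of_lt h]
    · rw [Nat.mod_eq_sub_mod (by omega), Nat.mod_eq_of_lt (by omega)]
  rw [key a (by omega), key b (by omega), key c (by omega), key d hd]
  generalize (o - a₀).val = r at *
  split_ifs <;> omega

/-! ### The bipartite case -/

/-- `E` is a symmetric irreflexive relation on `{0, …, n - 1}` each of whose neighborhoods is an
arc of the circular order `0, 1, …, n - 1`; arcs are described by the absence of alternation along
four circularly ordered points. -/
structure CircRel (n : ℕ) (E : ℕ → ℕ → Prop) : Prop where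
  symm : ∀ p q, E p q → E q p
  irrefl : ∀ p, ¬ E p p
  lt : ∀ p q, E p q → p < n
  alt₁ : ∀ v a b c d, v < n → a < b → b < c → c < d → d < n →
    ¬ (E v a ∧ ¬ E v b ∧ E v c ∧ ¬ E v d)
  alt₂ : ∀ v a b c d, v < n → a < b → b < c → c < d → d < n →
    ¬ (¬ E v a ∧ E v b ∧ ¬ E v c ∧ E v d)

/-- A non-related pair `0, J` with `x` related to `0` between `0` and `J`, and `y` related to `J`
between `J` and `n`, makes the relation bipartite; `0` lies outside the class `A`. -/
lemma exists_coloring {n : ℕ} {E : ℕ → ℕ → Prop} (hE : CircRel n E) {J x y : ℕ}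
    (h0J : ¬ E 0 J) (hx0 : 0 < x) (hxJ : x < J) (hx : E 0 x) (hJy : J < y) (hy : E J y) :
    ∃ A : ℕ → Prop, ¬ A 0 ∧ ∀ p q, E p q → (A p ↔ ¬ A q) := by
  obtain ⟨symm, irrefl, lt, alt₁, alt₂⟩ := hE
  have lt' : ∀ p q, E p q → q < n := fun p q h => lt q p (symm p q h)
  have hyn : y < n := lt' _ _ hy
  -- Neighbors of `0` lie in `(0, J)`, those of `J` in `(J, n)`.
  have T0 : ∀ q, E 0 q → 0 < q ∧ q < J := by
    intro q hq
    have h1 : q ≠ 0 := by rintro rfl; exact irrefl _ hq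
    have h2 : q ≠ J := by rintro rfl; exact h0J hq
    refine ⟨by omega, ?_⟩
    by_contra h3
    exact alt₂ 0 0 x J q (by omega) hx0 hxJ (by omega) (lt' _ _ hq) ⟨irrefl _, hx, h0J, hq⟩
  have hJ0 : ¬ E J 0 := fun h => h0J (symm _ _ h)
  have TJ : ∀ q, E J q → J < q := by
    intro q hq
    have h1 : q ≠ J := by rintro rfl; exact irrefl _ hq
    have h2 : q ≠ 0 := by rintro rfl; exact hJ0 hq
    by_contra h3
    exact alt₂ J 0 q J y (by omega) (by omega) (by omega) hJy hyn ⟨hJ0, hq, irrefl _, hy⟩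
  -- A vertex in `(0, J)` with one neighbor between it and `J` has all its neighbors there.
  have T1 : ∀ p q r, 0 < p → p < J → E p q → E p r → p < q → q < J → p < r ∧ r < J := by
    intro p q r hp hpJ hq hr hpq hqJ
    have h1 : r ≠ p := by rintro rfl; exact irrefl _ hr
    have h2 : ¬ E p J := fun h => by have := TJ _ (symm _ _ h); omega
    have h3 : r ≠ J := by rintro rfl; exact h2 hr
    have hrn := lt' _ _ hr
    by_contra h4
    rcases Nat.lt_or_ge r p with h5 | h5
    · exact alt₁ p r p q J (by omega) h5 hpq hqJ (by omega) ⟨hr, irrefl _, hq, h2⟩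
    · exact alt₂ p p q J r (by omega) hpq hqJ (by omega) hrn ⟨irrefl _, hq, h2, hr⟩
  -- A vertex in `(J, n)` with one neighbor beyond it has all its neighbors beyond it.
  have T2 : ∀ p q r, J < p → E p q → E p r → p < q → p < r := by
    intro p q r hp hq hr hpq
    have h1 : r ≠ p := by rintro rfl; exact irrefl _ hr
    have h2 : ¬ E p 0 := fun h => by have := T0 _ (symm _ _ h); omega
    have h3 : r ≠ 0 := by rintro rfl; exact h2 hr
    have hqn := lt' _ _ hq
    by_contra h4
    exact alt₂ p 0 r p q (by omega) (by omega) (by omega) hpq hqn ⟨h2, hr, irrefl _, hq⟩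
  refine ⟨fun p => (0 < p ∧ p ≤ J ∧ ∃ q, E p q ∧ ¬ (p < q ∧ q < J)) ∨
    (J < p ∧ ∀ q, E p q → p < q), by omega, ?_⟩
  -- By symmetry it suffices to treat `p < q`.
  suffices H : ∀ p q, p < q → E p q →
      (((0 < p ∧ p ≤ J ∧ ∃ q, E p q ∧ ¬ (p < q ∧ q < J)) ∨ (J < p ∧ ∀ q, E p q → p < q)) ↔
      ¬ ((0 < q ∧ q ≤ J ∧ ∃ r, E q r ∧ ¬ (q < r ∧ r < J)) ∨ (J < q ∧ ∀ r, E q r → q < r))) by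
    intro p q hpq
    rcases Nat.lt_trichotomy p q with h | h | h
    · exact H p q h hpq
    · subst h; exact absurd hpq (irrefl _)
    · exact iff_not_comm.1 (H q p h (symm _ _ hpq))
  intro p q hlt hpq
  have hqp := symm _ _ hpq
  rcases Nat.lt_or_ge J q with hJq | hJq
  · -- `q` lies beyond `J` and has the smaller neighbor `p`, so `q ∉ A`.
    have hq : ¬ ((0 < q ∧ q ≤ J ∧ ∃ r, E q r ∧ ¬ (q < r ∧ r < J)) ∨
        (J < q ∧ ∀ r, E q r → q < r)) := by
      rintro (h | h)
      · omega
      · have := h.2 p hqp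
        omega
    refine iff_of_true ?_ hq
    rcases Nat.lt_or_ge J p with hJp | hJp
    · exact Or.inr ⟨hJp, fun r hr => T2 p q r hJp hpq hr hlt⟩
    · have : p ≠ 0 := by
        rintro rfl
        have := T0 _ hpq
        omega
      exact Or.inl ⟨by omega, hJp, q, hpq, by omega⟩
  · have hqJ : q ≠ J := by
      rintro rfl
      have := TJ _ hqp
      omega
    -- `q` lies in `(0, J)` and has the smaller neighbor `p`, so `q ∈ A`.
    refine iff_of_false ?_ (not_not.2 (Or.inl ⟨by omega, hJq, p, hqp, by omega⟩))
    rintro (⟨h1, h2, r, hr, h3⟩ | h)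
    · exact h3 (T1 p q r h1 (by omega) hpq hr hlt (by omega))
    · omega

/-- The complement of a bipartite `CircRel` has a model on the circle of length `2 * n`: `p ∈ A`
gets `[-p, n - p]`, while `p ∉ A` with neighbors `[s, t]` gets the complement of `[-t, n - s]`. -/
lemma model_of_coloring {n : ℕ} {E : ℕ → ℕ → Prop} (hE : CircRel n E) {A : ℕ → Prop}
    (hA0 : ¬ A 0) (hA : ∀ p q, E p q → (A p ↔ ¬ A q)) :
    ∃ s k : ℕ → ℕ, (∀ p < n, s p < 2 * n ∧ 0 < k p ∧ k p ≤ 2 * n) ∧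
      ∀ p q, p < n → q < n → p ≠ q →
        (¬ E p q ↔ Hit (2 * n) (s p) (k p) (s q) ∨ Hit (2 * n) (s q) (k q) (s p)) := by
  classical
  have lt' : ∀ p q, E p q → q < n := fun p q h => hE.lt q p (hE.symm p q h)
  -- Neighborhoods of vertices outside `A` avoid `0`, so they are intervals.
  have hint : ∀ p, p < n → ¬ A p → (∃ q, E p q) →
      ∃ s t, 0 < s ∧ s ≤ t ∧ t < n ∧ ∀ q, E p q ↔ s ≤ q ∧ q ≤ t := by
    intro p hp hAp hex
    have h0 : ¬ E p 0 := fun h => by have := hA _ _ h; tauto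
    obtain ⟨q₀, hq₀⟩ := hex
    have hs := Nat.find_spec (⟨q₀, hq₀⟩ : ∃ q, E p q)
    have hsm := fun q (hq : E p q) => Nat.find_min' (⟨q₀, hq₀⟩ : ∃ q, E p q) hq
    generalize Nat.find (⟨q₀, hq₀⟩ : ∃ q, E p q) = s at *
    have ht : E p (Nat.findGreatest (E p) n) :=
      Nat.findGreatest_spec (lt' _ _ hs).le hs
    have htm := fun q (hq : E p q) => Nat.le_findGreatest (P := E p) (lt' _ _ hq).le hq
    generalize Nat.findGreatest (E p) n = t at *
    have hs0 : s ≠ 0 := by rintro rfl; exact h0 hs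
    refine ⟨s, t, by omega, hsm _ ht, lt' _ _ ht, fun q => ⟨fun h => ⟨hsm _ h, htm _ h⟩, ?_⟩⟩
    rintro ⟨h1, h2⟩
    by_contra hq
    have h3 : s ≠ q := by rintro rfl; exact hq hs
    have h4 : q ≠ t := by rintro rfl; exact hq ht
    exact hE.alt₂ p 0 s q t hp (by omega) (by omega) (by omega) (lt' _ _ ht) ⟨h0, hs, hq, ht⟩
  choose! S T hS0 hST hTn hST' using hint
  -- Starts and lengths of the arcs of the vertices outside `A`.
  have hB : ∀ p, ∃ s k, p < n → ¬ A p → s < 2 * n ∧ 0 < k ∧ k ≤ 2 * n ∧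
      s ≤ n ∧ n < s + k ∧ ∀ q, 0 < q → q < n →
        (¬ E p q ↔ Hit (2 * n) (2 * n - q) (n + 1) s ∨ Hit (2 * n) s k (2 * n - q)) := by
    intro p
    by_cases hex : ∃ q, E p q
    · refine ⟨n - S p + 1, n - 1 - (T p - S p), fun hp hAp => ?_⟩
      have h1 := hS0 p hp hAp hex
      have h2 := hST p hp hAp hex
      have h3 := hTn p hp hAp hex
      refine ⟨by omega, by omega, by omega, by omega, by omega, fun q hq hqn => ?_⟩
      rw [hST' p hp hAp hex q]
      unfold Hit
      omega
    · refine ⟨0, 2 * n, fun hp hAp => ⟨by omega, by omega, by omega, by omega, by omega,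
        fun q hq hqn => ?_⟩⟩
      have : ¬ E p q := fun h => hex ⟨q, h⟩
      refine iff_of_true this ?_
      unfold Hit
      omega
  choose s k hsk using hB
  refine ⟨fun p => if A p then 2 * n - p else s p, fun p => if A p then n + 1 else k p, ?_, ?_⟩
  · intro p hp
    have hp0 : A p → p ≠ 0 := by rintro h rfl; exact hA0 h
    by_cases h : A p
    · have := hp0 h
      simp only [h, if_true]
      omega
    · have := hsk p hp h
      simp only [h, if_false]
      omega
  · intro p q hp hq hpq
    have hp0 : A p → p ≠ 0 := by rintro h rfl; exact hA0 h
    have hq0 : A q → q ≠ 0 := by rintro h rfl; exact hA0 h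
    by_cases h1 : A p <;> by_cases h2 : A q <;> simp only [h1, h2, if_true, if_false]
    · refine iff_of_true (fun h => by have := hA _ _ h; tauto) ?_
      have := hp0 h1
      have := hq0 h2
      unfold Hit
      omega
    · have := (hsk q hq h2).2.2.2.2.2 p (by have := hp0 h1; omega) hp
      rw [← this]
      exact not_congr ⟨hE.symm _ _, hE.symm _ _⟩
    · have := (hsk p hp h1).2.2.2.2.2 q (by have := hq0 h2; omega) hq
      rw [this, or_comm]
    · refine iff_of_true (fun h => by have := hA _ _ h; tauto) ?_
      have := hsk p hp h1
      have := hsk q hq h2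
      unfold Hit
      omega

/-! ### The two cases combined -/

/-- Tucker. If the closed neighborhood hypergraph `N[G]` of a finite
simple graph `G` is a circular-arc hypergraph (i.e. `G` is concave-round), then `G` is
a circular-arc graph. -/
theorem stmt2 {V : Type*} [Fintype V] (G : SimpleGraph V)
    (h : ∃ f : V ≃ ZMod (Fintype.card V),
      ∀ v, IsArc (Fintype.card V) (f '' ClosedNbhd G v)) :
    IsCAGraph G := by
  classical
  obtain ⟨n, hn⟩ : ∃ n, n = Fintype.card V := ⟨_, rfl⟩
  rw [← hn] at h
  obtain ⟨f, hf⟩ := h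
  -- For empty `V` the type `ZMod 0 = ℤ` is nonempty, so `f` cannot exist.
  have hV : 0 < Fintype.card V := Fintype.card_pos_iff.2 ⟨f.symm 0⟩
  have : NeZero n := ⟨by omega⟩
  have hmem : ∀ v x, x ∈ f '' ClosedNbhd G v ↔ f.symm x = v ∨ G.Adj (f.symm x) v := by
    intro v x
    rw [Equiv.image_eq_preimage_symm]
    rfl
  by_cases hgood : ∀ u v, G.Adj u v →
      (∀ i ≤ (f v - f u).val, f u + (i : ZMod n) ∈ f '' ClosedNbhd G u) ∨
      (∀ i ≤ (f u - f v).val, f v + (i : ZMod n) ∈ f '' ClosedNbhd G v)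
  · -- The arcs running clockwise from each vertex inside its closed neighborhood.
    let k : V → ℕ := fun v =>
      Nat.findGreatest (fun k => ∀ i < k, f v + (i : ZMod n) ∈ f '' ClosedNbhd G v) n
    have hk : ∀ v, k v ≤ n := fun v => Nat.findGreatest_le n
    have hspec : ∀ v, ∀ i < k v, f v + (i : ZMod n) ∈ f '' ClosedNbhd G v := fun v =>
      Nat.findGreatest_spec (P := fun k => ∀ i < k, f v + (i : ZMod n) ∈ f '' ClosedNbhd G v)
        (Nat.zero_le n) (by simp)
    have hmax : ∀ v d, d < n → (∀ i ≤ d, f v + (i : ZMod n) ∈ f '' ClosedNbhd G v) → d < k v := by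
      intro v d hd h
      exact Nat.le_findGreatest
        (P := fun k => ∀ i < k, f v + (i : ZMod n) ∈ f '' ClosedNbhd G v) hd
        (fun i hi => h i (by omega))
    have hk0 : ∀ v, 0 < k v := fun v => hmax v 0 (by omega) (by
      intro i hi
      obtain rfl : i = 0 := by omega
      rw [hmem]
      simp)
    have hhit : ∀ u v, Hit n (f u).val (k u) (f v).val ↔ (f v - f u).val < k u := by
      intro u v
      rw [← mem_arc_iff_hit (ZMod.val_lt _) (ZMod.val_lt _) (hk u), mem_arc_iff _ _ (hk u)]
      simp
    have hadj : ∀ u v, u ≠ v → (f v - f u).val < k u → G.Adj u v := by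
      intro u v huv hlt
      have := hspec u _ hlt
      rw [hmem] at this
      simp only [ZMod.natCast_val, ZMod.cast_id', id, add_sub_cancel, Equiv.symm_apply_apply]
        at this
      rcases this with h | h
      · exact absurd h.symm huv
      · exact h.symm
    refine isCAGraph_of_hit G n (fun v => (f v).val) k (fun v => ZMod.val_lt _) hk0 hk hV ?_
    intro u v huv
    rw [hhit, hhit]
    constructor
    · intro h
      exact (hgood u v h).imp (hmax u _ (ZMod.val_lt _)) (hmax v _ (ZMod.val_lt _))
    · rintro (h | h)
      · exact hadj u v huv h
      · exact (hadj v u huv.symm h).symm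
  · push Not at hgood
    obtain ⟨u, v, huv, ⟨x, hxle, hx⟩, ⟨y, hyle, hy⟩⟩ := hgood
    -- Coordinates on the circle with origin `u`.
    let g : ℕ → V := fun p => f.symm (f u + (p : ZMod n))
    let P : V → ℕ := fun w => (f w - f u).val
    have hgP : ∀ w, g (P w) = w := by intro w; simp [g, P]
    have hPn : ∀ w, P w < n := fun w => ZMod.val_lt _
    have hPinj : Function.Injective P := fun a b hab => by rw [← hgP a, hab, hgP]
    have hginj : ∀ p q, p < n → q < n → g p = g q → p = q := by
      intro p q hp hq hpq
      have := congrArg ZMod.val (add_left_cancel (f.symm.injective hpq))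
      rwa [ZMod.val_natCast, ZMod.val_natCast, Nat.mod_eq_of_lt hp, Nat.mod_eq_of_lt hq] at this
    let E : ℕ → ℕ → Prop := fun p q => p < n ∧ q < n ∧ g p ≠ g q ∧ ¬ G.Adj (g p) (g q)
    have hEmem : ∀ p q, p < n → q < n →
        (E p q ↔ f u + (q : ZMod n) ∉ f '' ClosedNbhd G (g p)) := by
      intro p q hp hq
      rw [hmem]
      change _ ↔ ¬ (g q = g p ∨ G.Adj (g q) (g p))
      simp only [E, hp, hq, true_and, not_or, G.adj_comm (g p), ne_eq, eq_comm (a := g p)]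
    have hE : CircRel n E := by
      refine ⟨?_, ?_, ?_, ?_, ?_⟩
      · rintro p q ⟨h1, h2, h3, h4⟩
        exact ⟨h2, h1, h3.symm, fun h => h4 h.symm⟩
      · rintro p ⟨-, -, h, -⟩
        exact h rfl
      · exact fun p q h => h.1
      · intro w a b c d hw hab hbc hcd hd
        rw [hEmem w a hw (by omega), hEmem w b hw (by omega), hEmem w c hw (by omega),
          hEmem w d hw hd, not_not, not_not]
        exact (not_alternating (hf (g w)) (f u) hab hbc hcd hd).2
      · intro w a b c d hw hab hbc hcd hd
        rw [hEmem w a hw (by omega), hEmem w b hw (by omega), hEmem w c hw (by omega),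
          hEmem w d hw hd, not_not, not_not]
        exact (not_alternating (hf (g w)) (f u) hab hbc hcd hd).1
    have hn0 : 0 < n := by omega
    have hPu : P u = 0 := by simp [P]
    have hg0 : g 0 = u := by rw [← hPu, hgP]
    have h0J : ¬ E 0 (P v) := by
      rintro ⟨-, -, -, h⟩
      rw [hg0, hgP] at h
      exact h huv
    have hPv0 : P v ≠ 0 := fun h => huv.ne (hPinj (hPu.trans h.symm))
    have hxJ : x ≤ P v := hxle
    have hxE : E 0 x := by
      rw [hEmem 0 x hn0 (hxJ.trans_lt (hPn v)), hg0]
      exact hx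
    have hx0 : x ≠ 0 := by rintro rfl; exact hE.irrefl _ hxE
    have hxJ' : x ≠ P v := by rintro rfl; exact h0J hxE
    -- The clockwise distance from `v` to `u` is `n - P v`.
    have hdist : (f u - f v).val = n - P v := by
      have h1 : f u - f v = -(f v - f u) := by ring
      have : NeZero (f v - f u) := ⟨fun h => hPv0 (by simp [P, h])⟩
      rw [h1, ZMod.val_neg_of_ne_zero]
    have hfv : f v = f u + (P v : ZMod n) := by simp [P]
    have hyn : y ≠ n - P v := by
      rintro rfl
      apply hy
      rw [hmem, hfv, Nat.cast_sub (hPn v).le]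
      simp [huv]
    have hyE : E (P v) (P v + y) := by
      rw [hEmem _ _ (hPn v) (by have := hPn v; omega), hgP]
      push_cast
      rw [← add_assoc, ← hfv]
      exact hy
    have hy0 : y ≠ 0 := by rintro rfl; exact hE.irrefl _ hyE
    obtain ⟨A, hA0, hA⟩ := exists_coloring hE h0J (Nat.pos_of_ne_zero hx0)
      (lt_of_le_of_ne hxJ hxJ') hxE (by omega) hyE
    obtain ⟨s, k, hsk, hmodel⟩ := model_of_coloring hE hA0 hA
    refine isCAGraph_of_hit G (2 * n) (s ∘ P) (k ∘ P) (fun w => (hsk _ (hPn w)).1)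
      (fun w => (hsk _ (hPn w)).2.1) (fun w => (hsk _ (hPn w)).2.2) hV ?_
    intro a b hab
    have := hmodel (P a) (P b) (hPn a) (hPn b) (hPinj.ne hab)
    simp only [Function.comp]
    rw [← this]
    simp only [E, hPn, hgP, true_and, ne_eq, hab, not_false_eq_true, not_not]
end

section
/- A finite simple graph G admits a bipartition of its vertex set into two independent sets U and W such that both hypergraphs N_U(G) = (N(w))_{w ∈ W} on vertex set U and N_W(G) = (N(u))_{u ∈ U} on vertex set W are interval hypergraphs (i.e., G is biconvex) if and only if the open neighborhood hypergraph N(G) = (N(v))_{v ∈ V(G)} is an interval hypergraph. -/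
/-!
If `U`, `W` is a biconvex bipartition, concatenating the two interval orderings (all of `U` before
all of `W`) is an interval ordering of `N(G)`: each `N(v)` lies in one of the two sides, and
each side is an interval of the concatenation (`concat_isLinearOrder`).

Conversely, fix an interval ordering of `N(G)`. As `v ∉ N(v)` and `N(v)` is an interval, the
neighbors of `v` lie all above or all below `v`. Taking for `U` the vertices with a neighbor above
and for `W` all others, the lower end of every edge is in `U` and the upper end in `W`, so the
two sets are independent; restricting the ordering to either side preserves intervals.
-/

open Set

/-- The concatenation of a relation on `U` and a relation on `W`, placing `U` before `W`. -/
def concatRel {V : Type*} {U W : Set V} (r : U → U → Prop) (s : W → W → Prop) (x y : V) : Prop :=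
  (x ∈ U ∧ y ∈ W) ∨ (∃ (hx : x ∈ U) (hy : y ∈ U), r ⟨x, hx⟩ ⟨y, hy⟩) ∨
    ∃ (hx : x ∈ W) (hy : y ∈ W), s ⟨x, hx⟩ ⟨y, hy⟩

theorem concat_isLinearOrder {V : Type*} {U W : Set V} (hun : ∀ x, x ∈ U ∨ x ∈ W)
    (hdis : ∀ x, x ∈ U → x ∉ W) {r : U → U → Prop} {s : W → W → Prop}
    (hr : IsLinearOrder U r) (hs : IsLinearOrder W s) : IsLinearOrder V (concatRel r s) where
  refl x := (hun x).elim (fun h => .inr (.inl ⟨h, h, hr.refl _⟩))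
    (fun h => .inr (.inr ⟨h, h, hs.refl _⟩))
  trans x y z := by
    rintro (⟨hx, hy⟩ | ⟨hx, hy, h⟩ | ⟨hx, hy, h⟩) (⟨hy', hz⟩ | ⟨hy', hz, h'⟩ | ⟨hy', hz, h'⟩)
    · exact .inl ⟨hx, hz⟩
    · exact absurd hy (hdis _ hy')
    · exact .inl ⟨hx, hz⟩
    · exact .inl ⟨hx, hz⟩
    · exact .inr (.inl ⟨hx, hz, hr.trans _ _ _ h h'⟩)
    · exact absurd hy' (hdis _ hy)
    · exact absurd hy (hdis _ hy')
    · exact absurd hy (hdis _ hy')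
    · exact .inr (.inr ⟨hx, hz, hs.trans _ _ _ h h'⟩)
  antisymm x y := by
    rintro (⟨hx, hy⟩ | ⟨hx, hy, h⟩ | ⟨hx, hy, h⟩) (⟨hy', hz⟩ | ⟨hy', hz, h'⟩ | ⟨hy', hz, h'⟩)
    · exact absurd hz (hdis _ hx)
    · exact absurd hy (hdis _ hy')
    · exact absurd hz (hdis _ hx)
    · exact absurd hz (hdis _ hx)
    · exact congrArg Subtype.val (hr.antisymm _ _ h h')
    · exact absurd hy' (hdis _ hy)
    · exact absurd hy (hdis _ hy')
    · exact absurd hx (hdis _ hz)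
    · exact congrArg Subtype.val (hs.antisymm _ _ h h')
  total x y := by
    rcases hun x with hx | hx <;> rcases hun y with hy | hy
    · exact (hr.total ⟨x, hx⟩ ⟨y, hy⟩).imp (fun h => .inr (.inl ⟨hx, hy, h⟩))
        (fun h => .inr (.inl ⟨hy, hx, h⟩))
    · exact .inl (.inl ⟨hx, hy⟩)
    · exact .inr (.inl ⟨hy, hx⟩)
    · exact (hs.total ⟨x, hx⟩ ⟨y, hy⟩).imp (fun h => .inr (.inr ⟨hx, hy, h⟩))
        (fun h => .inr (.inr ⟨hy, hx, h⟩))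

theorem restrict_isLinearOrder {V : Type*} {r : V → V → Prop} (hr : IsLinearOrder V r)
    (S : Set V) : IsLinearOrder S (fun x y => r x y) where
  refl x := hr.refl x.1
  trans x y z := hr.trans x.1 y.1 z.1
  antisymm _ _ h h' := Subtype.ext (hr.antisymm _ _ h h')
  total x y := hr.total x.1 y.1

/-- A finite simple graph `G` is biconvex (it admits a bipartition into
independent sets `U`, `W` such that both `N_U(G)` and `N_W(G)` are interval hypergraphs)
iff its open neighborhood hypergraph `N(G)` is an interval hypergraph. -/
theorem stmt4 {V : Type*} [Fintype V] (G : SimpleGraph V) :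
    (∃ U W : Set V, U ∪ W = Set.univ ∧ U ∩ W = ∅ ∧
      (∀ u ∈ U, ∀ v ∈ U, ¬ G.Adj u v) ∧
      (∀ u ∈ W, ∀ v ∈ W, ¬ G.Adj u v) ∧
      IsIntervalHypergraph (fun w : W => {u : U | G.Adj (u : V) (w : V)}) ∧
      IsIntervalHypergraph (fun u : U => {w : W | G.Adj (u : V) (w : V)}))
    ↔ IsIntervalHypergraph (fun v : V => G.neighborSet v) := by
  constructor
  · rintro ⟨U, W, hun, hdis, hU, hW, ⟨r, hr, hrI⟩, ⟨s, hs, hsI⟩⟩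
    have hun' : ∀ x, x ∈ U ∨ x ∈ W := fun x => by
      have : x ∈ U ∪ W := hun ▸ Set.mem_univ x
      exact this
    have hdis' : ∀ x, x ∈ U → x ∉ W := fun x hx hx' => by
      have : x ∈ U ∩ W := ⟨hx, hx'⟩
      simp [hdis] at this
    refine ⟨concatRel r s, concat_isLinearOrder hun' hdis' hr hs, ?_⟩
    intro v x y z hxy hyz hx hz
    rw [SimpleGraph.mem_neighborSet] at hx hz ⊢
    rcases hun' v with hv | hv
    · have hxW : x ∈ W := (hun' x).resolve_left fun h => hU v hv x h hx
      have hzW : z ∈ W := (hun' z).resolve_left fun h => hU v hv z h hz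
      -- the element `y` is preceded by `x ∈ W`, so it is in `W` as well
      rcases hxy with ⟨h, -⟩ | ⟨h, -⟩ | ⟨_, hyW, hxy⟩
      · exact absurd hxW (hdis' _ h)
      · exact absurd hxW (hdis' _ h)
      rcases hyz with ⟨h, -⟩ | ⟨h, -⟩ | ⟨_, _, hyz⟩
      · exact absurd hyW (hdis' _ h)
      · exact absurd hyW (hdis' _ h)
      exact hsI ⟨v, hv⟩ ⟨x, hxW⟩ ⟨y, hyW⟩ ⟨z, hzW⟩ hxy hyz hx hz
    · have hxU : x ∈ U := (hun' x).resolve_right fun h => hW v hv x h hx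
      have hzU : z ∈ U := (hun' z).resolve_right fun h => hW v hv z h hz
      -- the element `y` is followed by `z ∈ U`, so it is in `U` as well
      rcases hyz with ⟨-, h⟩ | ⟨hyU, _, hyz⟩ | ⟨-, h, -⟩
      · exact absurd h (hdis' _ hzU)
      · rcases hxy with ⟨-, h⟩ | ⟨_, _, hxy⟩ | ⟨h, -⟩
        · exact absurd h (hdis' _ hyU)
        · exact (hrI ⟨v, hv⟩ ⟨x, hxU⟩ ⟨y, hyU⟩ ⟨z, hzU⟩ hxy hyz hx.symm hz.symm).symm
        · exact absurd h (hdis' _ hxU)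
      · exact absurd h (hdis' _ hzU)
  · rintro ⟨r, hr, hI⟩
    -- no vertex has neighbors on both sides of it in the ordering
    have key : ∀ v x z, G.Adj v x → G.Adj v z → r x v → ¬ r v z := fun v x z hx hz hxv hvz =>
      G.irrefl (hI v x v z hxv hvz hx hz)
    refine ⟨{v | ∃ z, G.Adj v z ∧ r v z}, {v | ∃ z, G.Adj v z ∧ r v z}ᶜ,
      Set.union_compl_self _, Set.inter_compl_self _, ?_, ?_,
      ⟨fun x y => r x y, restrict_isLinearOrder hr _, ?_⟩,
      ⟨fun x y => r x y, restrict_isLinearOrder hr _, ?_⟩⟩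
    · rintro u ⟨a, hua, hra⟩ v ⟨b, hvb, hrb⟩ huv
      rcases hr.total u v with h | h
      · exact key v u b huv.symm hvb h hrb
      · exact key u v a huv hua h hra
    · intro u hu v hv huv
      rcases hr.total u v with h | h
      · exact hu ⟨v, huv, h⟩
      · exact hv ⟨u, huv.symm, h⟩
    · intro w x y z hxy hyz hx hz
      exact (hI w x y z hxy hyz (SimpleGraph.Adj.symm hx) (SimpleGraph.Adj.symm hz)).symm
    · intro u x y z hxy hyz hx hz
      exact hI u x y z hxy hyz hx hz
end

section
/- Let H be a hypergraph on a finite vertex set V and let H^⊂ denote its tightened hypergraph H ∪ {A \ B : A, B ∈ H, B ⊊ A}. Then: (a) a linear order ≤ on V is a tight interval ordering of H if and only if it is an interval ordering of H^⊂; (b) a bijection f : V → ZMod n (n = |V|) is a tight arc ordering of H if and only if it is an arc ordering of H^⊂. -/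
/-!
Everything rests on one fact about a total preorder on a finite type: for intervals `∅ ≠ B ⊆ A`,
the difference `A \ B` is again an interval iff `B` contains a minimum or a maximum of `A`
(`tight_iff_interval_diff`). If `B` contains the minimum of `A`, then `A \ B` is what remains of `A`
above `B`; if `B` misses both extremes of `A`, any point of `B` lies between two points of `A \ B`.
This gives part (a).

For part (b), a pair `B ⊆ A` with `f(A)` the whole circle causes no trouble, as the complement of
an arc is an arc (`isArc_compl`). Otherwise some point `c` lies outside `f(A)`, and cutting the
circle at `c` gives the linear order `cutLE c`. For subsets of the circle avoiding `c`, arcs are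
exactly the intervals of this order (`isArc_iff_interval`), and sharing a start (end) point is
sharing a minimum (maximum) (`sharesStart_iff`, `sharesEnd_iff`), so the fact above applies again.
-/

open Set

/-- The tightened hypergraph `H^⊂ = H ∪ {A \ B : A, B ∈ H, B ⊊ A}`. -/
def Tightened {V : Type*} (H : Set (Set V)) : Set (Set V) :=
  H ∪ {S | ∃ A ∈ H, ∃ B ∈ H, B ⊂ A ∧ S = A \ B}

/-- `r` is an interval ordering of the hyperedge family `H`. -/
def IsIntervalOrderingSet {V : Type*} (r : V → V → Prop) (H : Set (Set V)) : Prop :=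
  ∀ A ∈ H, IsIntervalWrt r A

/-- `r` is a tight interval ordering of `H`: whenever `A ⊇ B` with `B` nonempty,
the intervals `A` and `B` have the same minimum or the same maximum. -/
def IsTightIntervalOrderingSet {V : Type*} (r : V → V → Prop) (H : Set (Set V)) : Prop :=
  IsIntervalOrderingSet r H ∧
  ∀ A ∈ H, ∀ B ∈ H, B ⊆ A → B.Nonempty →
    (∃ m ∈ B, ∀ x ∈ A, r m x) ∨ (∃ m ∈ B, ∀ x ∈ A, r x m)

/-- `f` is an arc ordering of the hyperedge family `H`. -/
def IsArcOrderingSet {V : Type*} (n : ℕ) (f : V ≃ ZMod n) (H : Set (Set V)) : Prop :=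
  ∀ A ∈ H, IsArc n (f '' A)

/-- `f` is a tight arc ordering of `H`: whenever `A ⊇ B` with `B` nonempty and
`f(A) ≠ ZMod n`, the arcs `f(A)` and `f(B)` share their start or their end point. -/
def IsTightArcOrderingSet {V : Type*} (n : ℕ) (f : V ≃ ZMod n) (H : Set (Set V)) : Prop :=
  IsArcOrderingSet n f H ∧
  ∀ A ∈ H, ∀ B ∈ H, B ⊆ A → B.Nonempty → f '' A ≠ Set.univ →
    SharesStart n (f '' A) (f '' B) ∨ SharesEnd n (f '' A) (f '' B)

/-! ### Intervals of a total preorder -/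

lemma exists_least {α : Type*} {r : α → α → Prop} (ht : ∀ x y z, r x y → r y z → r x z)
    (htot : ∀ x y, r x y ∨ r y x) {A : Set α} (hA : A.Finite) (hne : A.Nonempty) :
    ∃ m ∈ A, ∀ x ∈ A, r m x := by
  induction A, hA using Set.Finite.induction_on with
  | empty => exact absurd hne (by simp)
  | @insert a s _ _ ih =>
    rcases s.eq_empty_or_nonempty with rfl | hs
    · refine ⟨a, by simp, ?_⟩
      rintro x (rfl | hx)
      · exact (htot x x).elim id id
      · exact absurd hx (by simp)
    · obtain ⟨m, hm, h⟩ := ih hs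
      rcases htot a m with h1 | h1
      · refine ⟨a, by simp, ?_⟩
        rintro x (rfl | hx)
        · exact (htot x x).elim id id
        · exact ht _ _ _ h1 (h x hx)
      · refine ⟨m, by simp [hm], ?_⟩
        rintro x (rfl | hx)
        · exact h1
        · exact h x hx

lemma tight_iff_interval_diff {α : Type*} [Finite α] {r : α → α → Prop}
    (ht : ∀ x y z, r x y → r y z → r x z) (htot : ∀ x y, r x y ∨ r y x) {A B : Set α}
    (hA : IsIntervalWrt r A) (hB : IsIntervalWrt r B) (hBA : B ⊆ A) (hne : B.Nonempty) :
    ((∃ m ∈ B, ∀ x ∈ A, r m x) ∨ (∃ m ∈ B, ∀ x ∈ A, r x m)) ↔ IsIntervalWrt r (A \ B) := by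
  constructor
  · intro h x y z hxy hyz hx hz
    refine ⟨hA x y z hxy hyz hx.1 hz.1, fun hy => ?_⟩
    rcases h with ⟨m, hm, h⟩ | ⟨m, hm, h⟩
    · exact hx.2 (hB m x y (h x hx.1) hxy hm hy)
    · exact hz.2 (hB y z m hyz (h z hz.1) hy hm)
  · intro h
    obtain ⟨y, hy⟩ := hne
    obtain ⟨a, ha, ha'⟩ := exists_least ht htot A.toFinite ⟨y, hBA hy⟩
    obtain ⟨b, hb, hb'⟩ := exists_least (r := fun x y => r y x)
      (fun x y z h1 h2 => ht _ _ _ h2 h1) (fun x y => htot y x) A.toFinite ⟨y, hBA hy⟩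
    by_cases haB : a ∈ B
    · exact Or.inl ⟨a, haB, ha'⟩
    by_cases hbB : b ∈ B
    · exact Or.inr ⟨b, hbB, hb'⟩
    exact absurd hy (h a y b (ha' y (hBA hy)) (hb' y (hBA hy)) ⟨ha, haB⟩ ⟨hb, hbB⟩).2

/-! ### Cutting the circle at a point -/

/-- The linear order `c, c + 1, …, c + (n - 1)` on `ZMod n` obtained by cutting the circle
just before `c`. -/
def cutLE {n : ℕ} (c x y : ZMod n) : Prop := (x - c).val ≤ (y - c).val

lemma eq_of_cut_eq {n : ℕ} [NeZero n] {c x y : ZMod n} (h : (x - c).val = (y - c).val) : x = y :=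
  sub_left_injective (ZMod.val_injective n h)

lemma cut_succ {n : ℕ} [NeZero n] {c x : ZMod n} (h : (x - c).val + 1 < n) :
    (x + 1 - c).val = (x - c).val + 1 := by
  have : x + 1 - c = (((x - c).val + 1 : ℕ) : ZMod n) := by
    push_cast [ZMod.natCast_zmod_val]; ring
  rw [this, ZMod.val_cast_of_lt h]

lemma cut_add {n : ℕ} [NeZero n] {c x : ZMod n} {i : ℕ} (h : (x - c).val + i < n) :
    (x + i - c).val = (x - c).val + i := by
  have : x + i - c = (((x - c).val + i : ℕ) : ZMod n) := by
    push_cast [ZMod.natCast_zmod_val]; ring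
  rw [this, ZMod.val_cast_of_lt h]

lemma cut_pos {n : ℕ} [NeZero n] {c x : ZMod n} (h : x ≠ c) : 0 < (x - c).val := by
  rw [ZMod.val_pos]; exact sub_ne_zero.2 h

lemma cut_pred {n : ℕ} [NeZero n] {c x : ZMod n} (h : 0 < (x - c).val) :
    (x - 1 - c).val + 1 = (x - c).val := by
  have h1 := ZMod.val_lt (x - c)
  have : x - 1 - c = (((x - c).val - 1 : ℕ) : ZMod n) := by
    rw [Nat.cast_sub h]; push_cast [ZMod.natCast_zmod_val]; ring
  rw [this, ZMod.val_cast_of_lt (by omega)]; omega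

lemma isArc_iff_interval {n : ℕ} [NeZero n] {c : ZMod n} {S : Set (ZMod n)} (hc : c ∉ S) :
    IsArc n S ↔ IsIntervalWrt (cutLE c) S := by
  constructor
  · rintro ⟨a, k, hk, rfl⟩ x y z hxy hyz ⟨i, hi, rfl⟩ ⟨j, hj, rfl⟩
    have hp := ZMod.val_lt (a - c)
    -- The arc does not run past the cut, since it would then contain `c = a + (n - (a - c))`.
    have hle : (a - c).val + k ≤ n := by
      by_contra hlt
      have h0 : a ≠ c := by
        rintro rfl
        exact hc ⟨0, by omega, by simp⟩
      have := cut_pos h0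
      refine hc ⟨n - (a - c).val, by omega, ?_⟩
      rw [Nat.cast_sub hp.le, ZMod.natCast_self, ZMod.natCast_zmod_val]; ring
    unfold cutLE at hxy hyz
    rw [cut_add (by omega)] at hxy hyz
    refine ⟨(y - c).val - (a - c).val, by omega, eq_of_cut_eq (c := c) ?_⟩
    rw [cut_add (by omega)]; omega
  · intro h
    rcases S.eq_empty_or_nonempty with rfl | hne
    · exact ⟨0, 0, by omega, by ext; simp⟩
    obtain ⟨a, ha, ha'⟩ := exists_least (r := cutLE c) (fun x y z => le_trans)
      (fun x y => le_total _ _) S.toFinite hne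
    obtain ⟨b, hb, hb'⟩ := exists_least (r := fun x y => cutLE c y x)
      (fun x y z h1 h2 => le_trans h2 h1) (fun x y => le_total _ _) S.toFinite hne
    have hab : (a - c).val ≤ (b - c).val := ha' b hb
    have hbn := ZMod.val_lt (b - c)
    refine ⟨a, (b - c).val - (a - c).val + 1, by omega, ?_⟩
    ext x
    constructor
    · intro hx
      have h1 : (a - c).val ≤ (x - c).val := ha' x hx
      have h2 : (x - c).val ≤ (b - c).val := hb' x hx
      refine ⟨(x - c).val - (a - c).val, by omega, eq_of_cut_eq (c := c) ?_⟩
      rw [cut_add (by omega)]; omega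
    · rintro ⟨i, hi, rfl⟩
      refine h a _ b ?_ ?_ ha hb <;> unfold cutLE <;> rw [cut_add (by omega)] <;> omega

lemma sharesStart_iff {n : ℕ} [NeZero n] {c : ZMod n} {A B : Set (ZMod n)} (hc : c ∉ A)
    (hA : IsIntervalWrt (cutLE c) A) (hBA : B ⊆ A) :
    SharesStart n A B ↔ ∃ m ∈ B, ∀ x ∈ A, cutLE c m x := by
  constructor
  · rintro ⟨a, haA, ha1, haB, -⟩
    refine ⟨a, haB, fun x hx => ?_⟩
    by_contra hlt
    unfold cutLE at hlt
    have := cut_pred (c := c) (x := a) (by omega)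
    exact ha1 (hA x _ a (by unfold cutLE; omega) (by unfold cutLE; omega) hx haA)
  · rintro ⟨m, hm, h⟩
    have hm1 : m - 1 ∉ A := fun hm' => by
      have h1 : (m - c).val ≤ (m - 1 - c).val := h _ hm'
      have := cut_pred (cut_pos (fun e : m = c => hc (e ▸ hBA hm)))
      omega
    exact ⟨m, hBA hm, hm1, hm, fun h' => hm1 (hBA h')⟩

lemma sharesEnd_iff {n : ℕ} [NeZero n] {c : ZMod n} {A B : Set (ZMod n)} (hc : c ∉ A)
    (hA : IsIntervalWrt (cutLE c) A) (hBA : B ⊆ A) :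
    SharesEnd n A B ↔ ∃ m ∈ B, ∀ x ∈ A, cutLE c x m := by
  constructor
  · rintro ⟨a, haA, ha1, haB, -⟩
    refine ⟨a, haB, fun x hx => ?_⟩
    by_contra hlt
    unfold cutLE at hlt
    have hxn := ZMod.val_lt (x - c)
    have := cut_succ (c := c) (x := a) (by omega)
    exact ha1 (hA a _ x (by unfold cutLE; omega) (by unfold cutLE; omega) haA hx)
  · rintro ⟨m, hm, h⟩
    have hm1 : m + 1 ∉ A := fun hm' => by
      have h1 : (m + 1 - c).val ≤ (m - c).val := h _ hm'
      have := cut_pred (cut_pos (fun e : m + 1 = c => hc (e ▸ hm')))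
      rw [add_sub_cancel_right] at this
      omega
    exact ⟨m, hBA hm, hm1, hm, fun h' => hm1 (hBA h')⟩

/-! ### Arcs and their differences -/

lemma isArc_compl {n : ℕ} [NeZero n] {S : Set (ZMod n)} (hS : IsArc n S) : IsArc n Sᶜ := by
  obtain ⟨a, k, hk, rfl⟩ := hS
  refine ⟨a + k, n - k, by omega, ?_⟩
  ext x
  have hx := ZMod.val_lt (x - a)
  have hxa : x = a + ((x - a).val : ZMod n) := by rw [ZMod.natCast_zmod_val]; ring
  constructor
  · intro h
    have hkx : k ≤ (x - a).val := by
      by_contra hlt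
      exact h ⟨_, by omega, hxa⟩
    refine ⟨(x - a).val - k, by omega, ?_⟩
    rw [Nat.cast_sub hkx, ZMod.natCast_zmod_val]; ring
  · rintro ⟨i, hi, h1⟩ ⟨j, hj, h2⟩
    have : ((k + i : ℕ) : ZMod n) = (j : ℕ) := by
      have := h1.symm.trans h2
      rw [add_assoc] at this
      push_cast
      exact add_left_cancel this
    have := congrArg ZMod.val this
    rw [ZMod.val_cast_of_lt (by omega), ZMod.val_cast_of_lt (by omega)] at this
    omega

lemma shares_iff_isArc_diff {n : ℕ} [NeZero n] {A B : Set (ZMod n)} (hA : IsArc n A)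
    (hB : IsArc n B) (hBA : B ⊆ A) (hne : B.Nonempty) (hu : A ≠ Set.univ) :
    (SharesStart n A B ∨ SharesEnd n A B) ↔ IsArc n (A \ B) := by
  obtain ⟨c, hc⟩ := (Set.ne_univ_iff_exists_notMem A).1 hu
  rw [isArc_iff_interval hc] at hA
  rw [isArc_iff_interval fun h => hc (hBA h)] at hB
  rw [isArc_iff_interval fun h => hc h.1, sharesStart_iff hc hA hBA, sharesEnd_iff hc hA hBA]
  exact tight_iff_interval_diff (r := cutLE c) (fun x y z => le_trans)
    (fun x y => le_total _ _) hA hB hBA hne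

/-- (a) A linear order on `V` is a tight interval ordering of `H` iff
it is an interval ordering of the tightened hypergraph `H^⊂`; (b) a bijection
`V ≃ ZMod n` (with `n = |V|`) is a tight arc ordering of `H` iff it is an arc ordering
of `H^⊂`. -/
theorem stmt5 {V : Type*} [Fintype V] (H : Set (Set V)) :
    (∀ r : V → V → Prop, IsLinearOrder V r →
      (IsTightIntervalOrderingSet r H ↔ IsIntervalOrderingSet r (Tightened H))) ∧
    (∀ f : V ≃ ZMod (Fintype.card V),
      (IsTightArcOrderingSet (Fintype.card V) f H ↔
        IsArcOrderingSet (Fintype.card V) f (Tightened H))) := by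
  constructor
  · intro r hr
    have ht : ∀ x y z, r x y → r y z → r x z := fun x y z => _root_.trans
    have htot : ∀ x y, r x y ∨ r y x := total_of r
    constructor
    · rintro ⟨hint, htight⟩ S (hS | ⟨A, hA, B, hB, hBA, rfl⟩)
      · exact hint S hS
      · rcases B.eq_empty_or_nonempty with rfl | hne
        · simpa using hint A hA
        · exact (tight_iff_interval_diff ht htot (hint A hA) (hint B hB) hBA.subset hne).1
            (htight A hA B hB hBA.subset hne)
    · intro h
      have hint : IsIntervalOrderingSet r H := fun A hA => h A (Or.inl hA)
      refine ⟨hint, fun A hA B hB hBA hne => ?_⟩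
      rw [tight_iff_interval_diff ht htot (hint A hA) (hint B hB) hBA hne]
      rcases hBA.eq_or_ssubset with rfl | hss
      · intro x y z _ _ hx
        exact absurd hx.1 hx.2
      · exact h _ (Or.inr ⟨A, hA, B, hB, hss, rfl⟩)
  · intro f
    -- `ZMod 0 = ℤ` is inhabited, so the bijection `f` rules out an empty `V`.
    have : Nonempty V := ⟨f.symm 0⟩
    have : NeZero (Fintype.card V) := ⟨Fintype.card_ne_zero⟩
    constructor
    · rintro ⟨harc, htight⟩ S (hS | ⟨A, hA, B, hB, hBA, rfl⟩)
      · exact harc S hS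
      · rw [Set.image_sdiff f.injective]
        rcases B.eq_empty_or_nonempty with rfl | hne
        · simpa using harc A hA
        by_cases hu : f '' A = Set.univ
        · rw [hu, ← Set.compl_eq_univ_sdiff]
          exact isArc_compl (harc B hB)
        · exact (shares_iff_isArc_diff (harc A hA) (harc B hB) (Set.image_mono hBA.subset)
            (hne.image f) hu).1 (htight A hA B hB hBA.subset hne hu)
    · intro h
      have harc : IsArcOrderingSet _ f H := fun A hA => h A (Or.inl hA)
      refine ⟨harc, fun A hA B hB hBA hne hu => ?_⟩
      rw [shares_iff_isArc_diff (harc A hA) (harc B hB) (Set.image_mono hBA) (hne.image f) hu,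
        ← Set.image_sdiff f.injective]
      rcases hBA.eq_or_ssubset with rfl | hss
      · exact ⟨0, 0, by omega, by ext; simp⟩
      · exact h _ (Or.inr ⟨A, hA, B, hB, hss, rfl⟩)
end

section
/- Let λ and λ' be two arc representations of a hypergraph H on the circle ZMod n, i.e., bijections from V(H) to ZMod n mapping every hyperedge of H to an arc. Then λ' = λ ∘ π for some permutation of twins π of H if and only if λ(A) = λ'(A) for every hyperedge A ∈ H. -/
open Set

/-- Two arc representations `lam`, `lam'` of a hypergraph `H` on the
circle `ZMod n` differ by a permutation of twins iff they map every hyperedge to the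
same arc. -/
theorem stmt6 {V : Type*} [Fintype V] {n : ℕ} (H : Set (Set V))
    (lam lam' : V ≃ ZMod n)
    (hlam : ∀ A ∈ H, IsArc n (lam '' A))
    (hlam' : ∀ A ∈ H, IsArc n (lam' '' A)) :
    (∃ π : Equiv.Perm V, (∀ x, ∀ A ∈ H, x ∈ A ↔ π x ∈ A) ∧ ∀ x, lam' x = lam (π x)) ↔
    (∀ A ∈ H, lam '' A = lam' '' A) := by
  constructor
  · rintro ⟨π, hπ, h⟩ A hA
    ext y
    constructor
    · rintro ⟨x, hx, rfl⟩
      exact ⟨π.symm x, (hπ _ A hA).2 (by simpa using hx), by simp [h]⟩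
    · rintro ⟨x, hx, rfl⟩
      exact ⟨π x, (hπ x A hA).1 hx, (h x).symm⟩
  · intro h
    -- The equation `lam' = lam ∘ π` forces `π = lam⁻¹ ∘ lam'`.
    refine ⟨lam'.trans lam.symm, fun x A hA => ?_, fun x => by simp⟩
    rw [← lam'.injective.mem_set_image, ← h A hA, ← lam.injective.mem_set_image]
    simp
end

section
/- Let H be a connected interval hypergraph on n vertices and let λ, λ' : V(H) → {1, …, n} be two tight interval representations of H. Then λ' = σ ∘ λ ∘ π, where σ is either the identity or the reflection x ↦ n+1−x of {1, …, n}, and π is a permutation of twins of H. -/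
/-!
In a tight representation any two hyperedges are comparable in the componentwise order on
(minimum, maximum).  Writing `c A` for the sum of the minimum and the maximum of the interval of `A`
(twice its centre), this gives `|c A - c B| = |A ∆ B|` whenever `A` and `B` intersect, while
`|c A - c B| ≥ |A| + |B|` whenever they are disjoint (`exists_centers`).

If `A` meets both `B` and `C`, these facts determine `|c B - c C|` from `H` alone
(`abs_centers_eq`): when `B` and `C` are disjoint, they must lie on opposite sides of `A`, because
`||A ∆ B| - |A ∆ C|| < |B| + |C|`.  Hence two tight representations agree, up to a common sign, on
the displacements from `A` to its neighbours.  Since the displacement between distinct intersecting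
hyperedges is nonzero, the sign propagates along paths, so after possibly reflecting one
representation the two centre functions differ by a constant.  The constant is `0` because some
hyperedge contains the vertex in position `0`.  Thus every hyperedge occupies the same positions in
both representations, which says exactly that `lam⁻¹ ∘ lam'` permutes twins.
-/


open Set

/-- The hypergraph `H` is connected: no isolated vertex, and the intersection graph
of its hyperedges is connected. -/
def ConnectedHypergraph {V : Type*} (H : Set (Set V)) : Prop :=
  (∀ x : V, ∃ A ∈ H, x ∈ A) ∧
  ∀ A ∈ H, ∀ B ∈ H, Relation.ReflTransGen
    (fun X Y => X ∈ H ∧ Y ∈ H ∧ (X ∩ Y).Nonempty) A B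

/-- `lam : V ≃ Fin n` is a tight interval representation of `H`: every hyperedge is
mapped to an interval of `Fin n`, and whenever `A ⊇ B` with `B` nonempty, the image
intervals have the same minimum or the same maximum. -/
def IsTightIntervalRep {V : Type*} {n : ℕ} (H : Set (Set V)) (lam : V ≃ Fin n) : Prop :=
  (∀ A ∈ H, ∀ x y z : Fin n, x ≤ y → y ≤ z →
    x ∈ lam '' A → z ∈ lam '' A → y ∈ lam '' A) ∧
  (∀ A ∈ H, ∀ B ∈ H, B ⊆ A → B.Nonempty →
    (∃ m ∈ lam '' B, ∀ x ∈ lam '' A, m ≤ x) ∨ (∃ m ∈ lam '' B, ∀ x ∈ lam '' A, x ≤ m))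

/-- The size of the symmetric difference of `A` and `B`, as an integer. -/
noncomputable def symmDiffSize {V : Type*} (A B : Set V) : ℤ :=
  (A.ncard : ℤ) + B.ncard - 2 * (A ∩ B).ncard

/-- `c` assigns to each hyperedge of `H` twice the centre of its interval under `lam`, these
centres obey the distance laws of a tight representation, and the intervals lie in `{0, …, n - 1}`. -/
structure IsCenters {V : Type*} {n : ℕ} (H : Set (Set V)) (lam : V ≃ Fin n)
    (c : Set V → ℤ) : Prop where
  meet : ∀ A ∈ H, ∀ B ∈ H, (A ∩ B).Nonempty → |c A - c B| = symmDiffSize A B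
  disj : ∀ A ∈ H, ∀ B ∈ H, ¬ (A ∩ B).Nonempty → (A.ncard : ℤ) + B.ncard ≤ |c A - c B|
  nonneg : ∀ A ∈ H, (A.ncard : ℤ) - 1 ≤ c A
  le : ∀ A ∈ H, c A ≤ 2 * ((n : ℤ) - 1) - (A.ncard - 1)
  mem : ∀ A ∈ H, ∀ v, v ∈ A ↔
    c A - A.ncard + 1 ≤ 2 * ((lam v : ℕ) : ℤ) ∧ 2 * ((lam v : ℕ) : ℤ) ≤ c A + A.ncard - 1

lemma ncard_of_mem_iff {V : Type*} {n : ℕ} (lam : V ≃ Fin n) (A : Set V) (a b : ℕ)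
    (hb : b < n) (h : ∀ v, v ∈ A ↔ a ≤ (lam v : ℕ) ∧ (lam v : ℕ) ≤ b) :
    A.ncard = b + 1 - a := by
  have hinj : Function.Injective (fun v => (lam v : ℕ)) :=
    Fin.val_injective.comp lam.injective
  have himg : (fun v => (lam v : ℕ)) '' A = ((Finset.Icc a b : Finset ℕ) : Set ℕ) := by
    ext k
    simp only [Set.mem_image, Finset.coe_Icc, Set.mem_Icc]
    constructor
    · rintro ⟨v, hv, rfl⟩
      exact (h v).1 hv
    · rintro ⟨h1, h2⟩
      refine ⟨lam.symm ⟨k, by omega⟩, (h _).2 ?_, ?_⟩ <;> simp [h1, h2]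
  rw [← Set.ncard_image_of_injective A hinj, himg, Set.ncard_coe_finset, Nat.card_Icc]

lemma exists_bounds {V : Type*} {n : ℕ} (lam : V ≃ Fin n) (A : Set V) (hne : A.Nonempty)
    (hA : ∀ x y z : Fin n, x ≤ y → y ≤ z → x ∈ lam '' A → z ∈ lam '' A → y ∈ lam '' A) :
    ∃ a b : ℕ, a ≤ b ∧ b < n ∧ ∀ v, v ∈ A ↔ a ≤ (lam v : ℕ) ∧ (lam v : ℕ) ≤ b := by
  have hfin : (lam '' A).Finite := Set.toFinite _
  have hne' : (lam '' A).Nonempty := hne.image _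
  obtain ⟨p, hp, hpm⟩ := Set.exists_min_image _ id hfin hne'
  obtain ⟨q, hq, hqm⟩ := Set.exists_max_image _ id hfin hne'
  refine ⟨p, q, hpm q hq, q.2, fun v => ⟨fun hv => ?_, fun hv => ?_⟩⟩
  · exact ⟨hpm _ (Set.mem_image_of_mem _ hv), hqm _ (Set.mem_image_of_mem _ hv)⟩
  · obtain ⟨w, hw, hwv⟩ := hA p (lam v) q hv.1 hv.2 hp hq
    exact lam.injective hwv ▸ hw

lemma exists_centers {V : Type*} {n : ℕ} (H : Set (Set V)) (lam : V ≃ Fin n)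
    (hne : ∀ A ∈ H, A.Nonempty) (h : IsTightIntervalRep H lam) :
    ∃ c : Set V → ℤ, IsCenters H lam c := by
  have hex : ∀ A : Set V, ∃ a b : ℕ, A ∈ H → a ≤ b ∧ b < n ∧
      ∀ v, v ∈ A ↔ a ≤ (lam v : ℕ) ∧ (lam v : ℕ) ≤ b := by
    intro A
    by_cases hA : A ∈ H
    · obtain ⟨a, b, hab⟩ := exists_bounds lam A (hne A hA) (h.1 A hA)
      exact ⟨a, b, fun _ => hab⟩
    · exact ⟨0, 0, fun h => absurd h hA⟩
  choose a b hab using hex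
  have hcard : ∀ A ∈ H, A.ncard = b A + 1 - a A := fun A hA =>
    ncard_of_mem_iff lam A _ _ (hab A hA).2.1 (hab A hA).2.2
  -- Nested hyperedges share an endpoint.
  have hnest : ∀ A ∈ H, ∀ B ∈ H, a A ≤ a B → b B ≤ b A → a A = a B ∨ b A = b B := by
    intro A hA B hB h1 h2
    obtain ⟨hA1, hA2, hA3⟩ := hab A hA
    obtain ⟨hB1, hB2, hB3⟩ := hab B hB
    have hsub : B ⊆ A := fun v hv => (hA3 v).2 (by have := (hB3 v).1 hv; omega)
    rcases h.2 A hA B hB hsub (hne B hB) with ⟨m, ⟨v, hv, rfl⟩, hm⟩ | ⟨m, ⟨v, hv, rfl⟩, hm⟩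
    · left
      have h3 := hm (⟨a A, by omega⟩ : Fin n)
        ⟨lam.symm ⟨a A, by omega⟩, (hA3 _).2 (by simp [hA1]), by simp⟩
      have h4 : (lam v : ℕ) ≤ a A := h3
      have := (hB3 v).1 hv
      omega
    · right
      have h3 := hm (⟨b A, by omega⟩ : Fin n)
        ⟨lam.symm ⟨b A, by omega⟩, (hA3 _).2 (by simp [hA1]), by simp⟩
      have h4 : b A ≤ (lam v : ℕ) := h3
      have := (hB3 v).1 hv
      omega
  refine ⟨fun A => (a A : ℤ) + b A, ⟨?_, ?_, fun A hA => ?_, fun A hA => ?_, ?_⟩⟩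
  · intro A hA B hB hAB
    obtain ⟨hA1, hA2, hA3⟩ := hab A hA
    obtain ⟨hB1, hB2, hB3⟩ := hab B hB
    have hc := ncard_of_mem_iff lam (A ∩ B) (max (a A) (a B)) (min (b A) (b B)) (by omega)
      (fun v => by rw [Set.mem_inter_iff, hA3, hB3]; omega)
    obtain ⟨v, hvA, hvB⟩ := hAB
    have e1 := (hA3 v).1 hvA
    have e2 := (hB3 v).1 hvB
    have e3 := hnest A hA B hB
    have e4 := hnest B hB A hA
    have e5 := hcard A hA
    have e6 := hcard B hB
    simp only [symmDiffSize]
    rw [hc, e5, e6]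
    rcases abs_cases ((a A : ℤ) + b A - (a B + b B)) with h | h <;> omega
  · intro A hA B hB hAB
    obtain ⟨hA1, hA2, hA3⟩ := hab A hA
    obtain ⟨hB1, hB2, hB3⟩ := hab B hB
    have hsep : b A < a B ∨ b B < a A := by
      by_contra hcon
      refine hAB ⟨lam.symm ⟨max (a A) (a B), by omega⟩, (hA3 _).2 ?_, (hB3 _).2 ?_⟩ <;>
        simp only [Equiv.apply_symm_apply] <;> omega
    rw [hcard A hA, hcard B hB]
    rcases abs_cases ((a A : ℤ) + b A - (a B + b B)) with h | h <;> omega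
  · have := hcard A hA
    have := (hab A hA).1
    omega
  · have := hcard A hA
    have := (hab A hA).1
    have := (hab A hA).2.1
    omega
  · intro A hA v
    obtain ⟨hA1, hA2, hA3⟩ := hab A hA
    rw [hA3, hcard A hA]
    omega

lemma IsCenters.rev {V : Type*} {n : ℕ} {H : Set (Set V)} {lam : V ≃ Fin n}
    {c : Set V → ℤ} (h : IsCenters H lam c) :
    IsCenters H (lam.trans Fin.revPerm) (fun A => 2 * ((n : ℤ) - 1) - c A) := by
  have habs : ∀ A B, |(2 * ((n : ℤ) - 1) - c A) - (2 * ((n : ℤ) - 1) - c B)| = |c A - c B| := by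
    intro A B
    rw [abs_sub_comm (c A)]
    congr 1
    ring
  refine ⟨fun A hA B hB hm => ?_, fun A hA B hB hm => ?_,
    fun A hA => ?_, fun A hA => ?_, fun A hA v => ?_⟩
  · rw [habs]; exact h.meet A hA B hB hm
  · rw [habs]; exact h.disj A hA B hB hm
  · have := h.le A hA
    omega
  · have := h.nonneg A hA
    omega
  · rw [h.mem A hA v]
    have hlt := (lam v).2
    have hval : ((lam.trans Fin.revPerm v : Fin n) : ℕ) = n - (lam v + 1) := by simp
    rw [hval]
    omega

/-- Among three hyperedges, one of which meets the other two, centre distances are determined by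
the hypergraph. -/
lemma abs_centers_eq {V : Type*} [Finite V] {n : ℕ} {H : Set (Set V)} {lam lam' : V ≃ Fin n}
    {c c' : Set V → ℤ} (h : IsCenters H lam c) (h' : IsCenters H lam' c') {A B C : Set V}
    (hA : A ∈ H) (hB : B ∈ H) (hC : C ∈ H) (hAB : (A ∩ B).Nonempty) (hAC : (A ∩ C).Nonempty) :
    |c B - c C| = |c' B - c' C| := by
  by_cases hBC : (B ∩ C).Nonempty
  · rw [h.meet B hB C hC hBC, h'.meet B hB C hC hBC]
  · have key : ∀ {l : V ≃ Fin n} {d : Set V → ℤ}, IsCenters H l d →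
        |d B - d C| = symmDiffSize A B + symmDiffSize A C := by
      intro l d hd
      have e1 := hd.meet A hA B hB hAB
      have e2 := hd.meet A hA C hC hAC
      have e3 := hd.disj B hB C hC hBC
      have p1 : 0 < (A ∩ B).ncard := (Set.ncard_pos (Set.toFinite _)).2 hAB
      have p2 : 0 < (A ∩ C).ncard := (Set.ncard_pos (Set.toFinite _)).2 hAC
      have q1 : (A ∩ B).ncard ≤ B.ncard := Set.ncard_le_ncard Set.inter_subset_right
      have q2 : (A ∩ C).ncard ≤ C.ncard := Set.ncard_le_ncard Set.inter_subset_right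
      simp only [symmDiffSize] at *
      grind
    rw [key h, key h']

lemma centers_ne {V : Type*} [Finite V] {n : ℕ} {H : Set (Set V)} {lam : V ≃ Fin n}
    {c : Set V → ℤ} (h : IsCenters H lam c) {A B : Set V} (hA : A ∈ H) (hB : B ∈ H)
    (hAB : (A ∩ B).Nonempty) (hne : A ≠ B) : c A ≠ c B := by
  intro he
  apply hne
  have e := h.meet A hA B hB hAB
  have q1 : (A ∩ B).ncard ≤ A.ncard := Set.ncard_le_ncard Set.inter_subset_left
  have q2 : (A ∩ B).ncard ≤ B.ncard := Set.ncard_le_ncard Set.inter_subset_right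
  rw [he, sub_self, abs_zero, symmDiffSize] at e
  have r1 := Set.eq_of_subset_of_ncard_le (Set.inter_subset_left : A ∩ B ⊆ A) (by omega)
  have r2 := Set.eq_of_subset_of_ncard_le (Set.inter_subset_right : A ∩ B ⊆ B) (by omega)
  exact r1.symm.trans r2

/-- If the two centre functions have the same nonzero displacement from `A` to one neighbour, then
they have the same displacements from `A` to all neighbours. -/
lemma displacement_eq {V : Type*} [Finite V] {n : ℕ} {H : Set (Set V)} {lam lam' : V ≃ Fin n}
    {c c' : Set V → ℤ} (h : IsCenters H lam c) (h' : IsCenters H lam' c') {A B C : Set V}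
    (hA : A ∈ H) (hB : B ∈ H) (hC : C ∈ H) (hAB : (A ∩ B).Nonempty) (hAC : (A ∩ C).Nonempty)
    (hne : A ≠ B) (hd : c' B - c' A = c B - c A) : c' C - c' A = c C - c A := by
  have e1 := abs_centers_eq h h' hA hB hC hAB hAC
  have e2 := h.meet A hA C hC hAC
  have e3 := h'.meet A hA C hC hAC
  have e4 := centers_ne h hA hB hAB hne
  grind

/-- If, around some hyperedge, the displacements of the two representations agree without
reflection, then every hyperedge occupies the same positions in both. -/
lemma twins_of_displacement {V : Type*} [Finite V] [Nonempty V] {n : ℕ} {H : Set (Set V)}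
    (hconn : ConnectedHypergraph H) {lam lam' : V ≃ Fin n} {c c' : Set V → ℤ}
    (h : IsCenters H lam c) (h' : IsCenters H lam' c') {A₀ : Set V} (hA₀ : A₀ ∈ H)
    (h0 : ∀ B ∈ H, (A₀ ∩ B).Nonempty → c' B - c' A₀ = c B - c A₀) :
    ∀ x, ∀ A ∈ H, x ∈ A ↔ lam.symm (lam' x) ∈ A := by
  have hprop : ∀ A, Relation.ReflTransGen
      (fun X Y => X ∈ H ∧ Y ∈ H ∧ (X ∩ Y).Nonempty) A₀ A →
      A ∈ H ∧ c' A - c' A₀ = c A - c A₀ ∧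
        ∀ B ∈ H, (A ∩ B).Nonempty → c' B - c' A = c B - c A := by
    intro A hA
    induction hA with
    | refl => exact ⟨hA₀, by ring, h0⟩
    | @tail X Y _ hXY ih =>
      obtain ⟨hX, hY, hm⟩ := hXY
      obtain ⟨_, ih1, ih2⟩ := ih
      have hs := ih2 Y hY hm
      refine ⟨hY, by linarith, fun B hB hYB => ?_⟩
      by_cases hXY : Y = X
      · subst hXY; exact ih2 B hB hYB
      · exact displacement_eq h h' hY hX hB (by rwa [Set.inter_comm]) hYB hXY (by linarith)
  have hall : ∀ A ∈ H, c' A - c A = c' A₀ - c A₀ := fun A hA => by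
    have := (hprop A (hconn.2 A₀ hA₀ A hA)).2.1
    linarith
  have hn : 0 < n := Fin.pos (lam (Classical.arbitrary V))
  -- A hyperedge through the vertex at position `0` in one representation starts there in that
  -- representation, and at a nonnegative position in the other.
  have hle : ∀ {l l' : V ≃ Fin n} {d d' : Set V → ℤ}, IsCenters H l d → IsCenters H l' d' →
      ∃ A ∈ H, d A ≤ d' A := by
    intro l l' d d' hd hd'
    obtain ⟨A, hA, hvA⟩ := hconn.1 (l.symm ⟨0, hn⟩)
    have e1 := (hd.mem A hA _).1 hvA
    have hpos : 0 < A.ncard := (Set.ncard_pos (Set.toFinite _)).2 ⟨_, hvA⟩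
    simp only [Equiv.apply_symm_apply] at e1
    have e2 := hd'.nonneg A hA
    refine ⟨A, hA, ?_⟩
    push_cast at e1
    omega
  have hzero : c' A₀ - c A₀ = 0 := by
    obtain ⟨A, hA, e1⟩ := hle h h'
    obtain ⟨B, hB, e2⟩ := hle h' h
    have := hall A hA
    have := hall B hB
    omega
  intro x A hA
  have e := hall A hA
  rw [h'.mem A hA x, h.mem A hA, Equiv.apply_symm_apply, show c' A = c A by omega]

/-- A connected interval hypergraph has, up to reflection and
permutation of twins, a unique tight interval representation. -/
theorem stmt7 {V : Type*} [Fintype V] (H : Set (Set V))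
    (hconn : ConnectedHypergraph H)
    (lam lam' : V ≃ Fin (Fintype.card V))
    (h1 : IsTightIntervalRep H lam) (h2 : IsTightIntervalRep H lam') :
    ∃ π : Equiv.Perm V, (∀ x, ∀ A ∈ H, x ∈ A ↔ π x ∈ A) ∧
      ((∀ x, lam' x = lam (π x)) ∨ (∀ x, lam' x = (lam (π x)).rev)) := by
  rcases isEmpty_or_nonempty V with hV | hV
  · exact ⟨Equiv.refl V, fun x => (hV.false x).elim, Or.inl fun x => (hV.false x).elim⟩
  -- An empty hyperedge would be disconnected from every hyperedge through a vertex.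
  have hne : ∀ A ∈ H, A.Nonempty := by
    intro A hA
    obtain ⟨B, hB, hvB⟩ := hconn.1 (Classical.arbitrary V)
    rcases (hconn.2 A hA B hB).cases_head with rfl | ⟨Y, ⟨_, _, hm⟩, _⟩
    · exact ⟨_, hvB⟩
    · exact hm.left
  obtain ⟨c, hc⟩ := exists_centers H lam hne h1
  obtain ⟨c', hc'⟩ := exists_centers H lam' hne h2
  obtain ⟨A, hA, -⟩ := hconn.1 (Classical.arbitrary V)
  have hkey : (∀ B ∈ H, (A ∩ B).Nonempty → c' B - c' A = c B - c A) ∨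
      (∀ B ∈ H, (A ∩ B).Nonempty →
        (2 * ((Fintype.card V : ℤ) - 1) - c' B) - (2 * ((Fintype.card V : ℤ) - 1) - c' A)
          = c B - c A) := by
    by_cases hB : ∃ B ∈ H, (A ∩ B).Nonempty ∧ A ≠ B
    · obtain ⟨B, hB, hm, hAB⟩ := hB
      have e1 := hc.meet A hA B hB hm
      have e2 := hc'.meet A hA B hB hm
      rw [← e2] at e1
      rcases abs_eq_abs.1 e1 with e | e
      · exact Or.inl fun C hC hAC =>
          displacement_eq hc hc' hA hB hC hm hAC hAB (by linarith)
      · exact Or.inr fun C hC hAC =>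
          displacement_eq hc hc'.rev hA hB hC hm hAC hAB (by linarith)
    · push Not at hB
      left
      intro B hBH hm
      rw [← hB B hBH hm]
      ring
  rcases hkey with h0 | h0
  · exact ⟨lam'.trans lam.symm, twins_of_displacement hconn hc hc' hA h0,
      Or.inl fun x => by simp⟩
  · exact ⟨(lam'.trans Fin.revPerm).trans lam.symm,
      twins_of_displacement hconn hc hc'.rev hA h0, Or.inr fun x => by simp⟩
end
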